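/- arXiv:2311.13550 — 8 statements merged into one kernel-verified Lean document; each statement's English description precedes it below -/
import Mathlib

section
/- Let $P_n$ denote the number of partitions of the vertex set of the $n\times n$ grid graph into $n$ parts, each of size $n$ and each inducing a connected subgraph. Then $\limsup_{n\to\infty} P_n^{1/n^2} \le \exp(4C/\pi)$, where $C = \sum_{k=0}^{\infty} \frac{(-1)^k}{(2k+1)^2}$ is Catalan's constant. -/
open Filter

/-- The `n × n` grid graph: vertices are pairs in `Fin n × Fin n`, adjacent iff they agree
in one coordinate and differ by exactly 1 in the other. -/
def gridGraph (n : ℕ) : SimpleGraph (Fin n × Fin n) :=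
  SimpleGraph.fromRel (fun a b =>
    (a.1 = b.1 ∧ (a.2 : ℕ) + 1 = (b.2 : ℕ)) ∨ (a.2 = b.2 ∧ (a.1 : ℕ) + 1 = (b.1 : ℕ)))

/-- `P` is a partition of the vertex set of the `n × n` grid graph into `n` parts,
each of size `n` and each inducing a connected subgraph. -/
def IsGridPartition (n : ℕ) (P : Finset (Finset (Fin n × Fin n))) : Prop :=
  P.card = n ∧
  (∀ s ∈ P, s.card = n) ∧
  (∀ s ∈ P, ((gridGraph n).induce (↑s : Set (Fin n × Fin n))).Connected) ∧
  (∀ v : Fin n × Fin n, ∃! s, s ∈ P ∧ v ∈ s)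

/-- The number of partitions of the `n × n` grid graph into `n` connected parts of size `n`. -/
noncomputable def gridPartitionCount (n : ℕ) : ℕ :=
  Nat.card {P : Finset (Finset (Fin n × Fin n)) // IsGridPartition n P}

/-- The cut score of a partition: the number of edges of the grid graph whose two endpoints
lie in different parts. -/
noncomputable def cutScore (n : ℕ) (P : Finset (Finset (Fin n × Fin n))) : ℕ :=
  {e ∈ (gridGraph n).edgeSet | ¬ ∃ s ∈ P, ∀ v ∈ e, v ∈ s}.ncard

/-- Catalan's constant. -/
noncomputable def catalanConst : ℝ := ∑' k : ℕ, (-1) ^ k / (2 * (k : ℝ) + 1) ^ 2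


/-- matrix attached to a choice function -/
noncomputable def choiceMat {V D : Type*} [DecidableEq V] (nb : D → V → V) (e : ℝ)
    (f : V → Option D) : Matrix V V ℝ :=
  fun v w => match f v with
    | none => e * (if v = w then 1 else 0)
    | some d => (if v = w then 1 else 0) - (if nb d v = w then 1 else 0)

noncomputable def torMat {V D : Type*} [DecidableEq V] [Fintype D] (nb : D → V → V) (e : ℝ) :
    Matrix V V ℝ :=
  fun v w => e * (if v = w then 1 else 0) +
    ∑ d, ((if v = w then 1 else 0) - (if nb d v = w then 1 else 0))

lemma torMat_det {V D : Type*} [Fintype V] [DecidableEq V] [Fintype D]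
    (nb : D → V → V) (e : ℝ) :
    (torMat nb e).det = ∑ f : V → Option D, (choiceMat nb e f).det := by
  classical
  have h := MultilinearMap.map_sum (R := ℝ) (Matrix.detRowAlternating (n := V) (R := ℝ)).toMultilinearMap
    (α := fun _ => Option D)
    (fun v o w => match o with
    | none => e * (if v = w then (1:ℝ) else 0)
    | some d => (if v = w then (1:ℝ) else 0) - (if nb d v = w then 1 else 0))
  have e1 : torMat nb e = fun v => ∑ o : Option D, (fun w => match o with
    | none => e * (if v = w then (1:ℝ) else 0)
    | some d => (if v = w then (1:ℝ) else 0) - (if nb d v = w then 1 else 0)) := by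
    funext v w
    rw [Finset.sum_apply, Fintype.sum_option]
    rfl
  rw [e1]
  exact h

lemma choiceMat_det_acyclic {V D : Type*} [Fintype V] [DecidableEq V]
    (nb : D → V → V) (e : ℝ) (f : V → Option D) (h : V → ℕ)
    (hh : ∀ v d, f v = some d → h (nb d v) < h v) :
    (choiceMat nb e f).det = e ^ (Finset.univ.filter (fun v => f v = none)).card := by
  classical
  have key : ∀ v w, v ≠ w → h v ≤ h w → choiceMat nb e f v w = 0 := by
    intro v w hvw hle
    unfold choiceMat
    rcases hf : f v with _ | d
    · simp [hvw]
    · have := hh v d hf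
      have h2 : nb d v ≠ w := by rintro rfl; omega
      simp [hvw, h2]
  have hdiag : ∀ v, choiceMat nb e f v v = if f v = none then e else 1 := by
    intro v
    unfold choiceMat
    rcases hf : f v with _ | d
    · simp
    · have := hh v d hf
      have h2 : nb d v ≠ v := by intro hc; rw [hc] at this; omega
      simp [h2]
  have hbt : Matrix.BlockTriangular (choiceMat nb e f).transpose h := by
    intro i j hij
    rw [Matrix.transpose_apply]
    exact key _ _ (by rintro rfl; omega) hij.le
  rw [← Matrix.det_transpose, hbt.det]
  have : ∀ a, ((choiceMat nb e f).transpose.toSquareBlock h a).det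
      = ∏ v : {v // h v = a}, (if f v = none then e else 1) := by
    intro a
    have : (choiceMat nb e f).transpose.toSquareBlock h a
        = Matrix.diagonal (fun v : {v // h v = a} => if f v = none then e else 1) := by
      ext i j
      rw [Matrix.toSquareBlock_def, Matrix.of_apply, Matrix.transpose_apply, Matrix.diagonal_apply]
      split_ifs with h1 h2
      · subst h1; rw [hdiag, if_pos h2]
      · subst h1; rw [hdiag, if_neg h2]
      · exact key _ _ (fun hc => h1 (Subtype.ext hc.symm)) (by rw [i.2, j.2])
    rw [this, Matrix.det_diagonal]
  simp_rw [this]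
  have h3 : ∀ a, ∏ v : {v // h v = a}, (if f v = none then e else 1)
     = ∏ v ∈ Finset.univ.filter (fun v => h v = a), (if f v = none then e else 1) := by
    intro a
    rw [Finset.prod_subtype (p := fun v => h v = a)]
    simp
  simp_rw [h3]
  rw [Finset.prod_fiberwise_of_maps_to (fun v _ => Finset.mem_image_of_mem h (Finset.mem_univ v))]
  rw [Finset.prod_ite]; simp

/-- from `v` one reaches a root in at most `k` steps -/
def reachIn {V D : Type*} (nb : D → V → V) (f : V → Option D) : ℕ → V → Prop
  | 0, v => f v = none
  | k + 1, v => f v = none ∨ ∃ d, f v = some d ∧ reachIn nb f k (nb d v)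

lemma choiceMat_det_nonneg {V D : Type*} [Fintype V] [DecidableEq V]
    (nb : D → V → V) (e : ℝ) (he : 0 ≤ e) (f : V → Option D) :
    0 ≤ (choiceMat nb e f).det := by
  classical
  let T : ℕ → V → Prop := reachIn nb f
  have T0 : ∀ v, T 0 v ↔ f v = none := fun v => Iff.rfl
  have TS : ∀ k v, T (k+1) v ↔ (f v = none ∨ ∃ d, f v = some d ∧ T k (nb d v)) :=
    fun k v => Iff.rfl
  by_cases hall : ∀ v, ∃ k, T k v
  · rw [choiceMat_det_acyclic nb e f (fun v => Nat.find (hall v))]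
    · positivity
    · intro v d hvd
      have hs := Nat.find_spec (hall v)
      rcases hk : Nat.find (hall v) with _ | k
      · rw [hk, T0] at hs; simp [hvd] at hs
      · rw [hk, TS] at hs
        have : T k (nb d v) := by
          rcases hs with hs | ⟨d', h1, h2⟩
          · simp [hvd] at hs
          · rw [hvd] at h1; cases h1; exact h2
        have := Nat.find_min' (hall (nb d v)) this
        omega
  · push Not at hall
    obtain ⟨v0, hv0⟩ := hall
    apply le_of_eq
    symm
    rw [← Matrix.exists_mulVec_eq_zero_iff]
    refine ⟨fun v => if ∃ k, T k v then 0 else 1, ?_, ?_⟩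
    · intro hc
      have := congrFun hc v0
      simp at this
      obtain ⟨k, hk⟩ := this
      exact hv0 k hk
    · funext v
      simp only [Matrix.mulVec, dotProduct, choiceMat, Pi.zero_apply]
      rcases hf : f v with _ | d
      · have : ∃ k, T k v := ⟨0, hf⟩
        refine Finset.sum_eq_zero fun x _ => ?_
        by_cases hx : v = x
        · subst hx; simp [this]
        · simp [hx]
      · have hiff : (∃ k, T k v) ↔ ∃ k, T k (nb d v) := by
          constructor
          · rintro ⟨k, hk⟩
            rcases k with _ | k
            · rw [T0] at hk; simp [hf] at hk
            · rw [TS] at hk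
              rcases hk with hs | ⟨d', h1, h2⟩
              · simp [hf] at hs
              · rw [hf] at h1; cases h1; exact ⟨k, h2⟩
          · rintro ⟨k, hk⟩
            exact ⟨k+1, Or.inr ⟨d, hf, hk⟩⟩
        simp only [sub_mul, Finset.sum_sub_distrib, ite_mul, one_mul, zero_mul,
          Finset.sum_ite_eq, Finset.mem_univ, if_true]
        simp only [hiff, sub_self]

lemma count_le_det {V D ι : Type*} [Fintype V] [DecidableEq V] [Fintype D] [Fintype ι]
    (nb : D → V → V) (e : ℝ) (he : 0 ≤ e) (n : ℕ) (F : ι → V → Option D)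
    (hinj : Function.Injective F)
    (hF : ∀ i, ∃ h : V → ℕ, ∀ v d, F i v = some d → h (nb d v) < h v)
    (hc : ∀ i, (Finset.univ.filter (fun v => F i v = none)).card = n) :
    (Fintype.card ι : ℝ) * e ^ n ≤ (torMat nb e).det := by
  classical
  rw [torMat_det]
  calc (Fintype.card ι : ℝ) * e ^ n = ∑ i : ι, (choiceMat nb e (F i)).det := by
        rw [Finset.sum_congr rfl (g := fun _ => e ^ n)]
        · simp
        · intro i _
          obtain ⟨h, hh⟩ := hF i
          rw [choiceMat_det_acyclic nb e _ h hh, hc]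
    _ = ∑ f ∈ Finset.univ.image F, (choiceMat nb e f).det := by
        rw [Finset.sum_image]; exact fun _ _ _ _ h => hinj h
    _ ≤ _ := Finset.sum_le_sum_of_subset_of_nonneg (Finset.subset_univ _)
        (fun f _ _ => choiceMat_det_nonneg nb e he f)

/-- the four neighbours on the torus -/
def torNb (n : ℕ) [NeZero n] (d : Fin 4) (v : Fin n × Fin n) : Fin n × Fin n :=
  ![(v.1 + 1, v.2), (v.1 - 1, v.2), (v.1, v.2 + 1), (v.1, v.2 - 1)] d

lemma pow_fin_add {n : ℕ} [NeZero n] {z : ℂ} (hz : z ^ n = 1) (a b : Fin n) :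
    z ^ ((a + b : Fin n) : ℕ) = z ^ (a : ℕ) * z ^ (b : ℕ) := by
  rw [Fin.val_add, ← pow_add, ← pow_eq_pow_mod _ hz]

lemma pow_fin_one {n : ℕ} [NeZero n] {z : ℂ} (hz : z ^ n = 1) :
    z ^ ((1 : Fin n) : ℕ) = z := by
  rw [Fin.val_one', ← pow_eq_pow_mod _ hz, pow_one]

lemma pow_fin_sub_one {n : ℕ} [NeZero n] {z : ℂ} (hz : z ^ n = 1) (a : Fin n) :
    z ^ ((a - 1 : Fin n) : ℕ) = z ^ (a : ℕ) * z⁻¹ := by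
  have hz0 : z ≠ 0 := by
    rintro rfl
    rw [zero_pow (NeZero.ne n)] at hz
    exact zero_ne_one hz
  have h := pow_fin_add hz (a - 1) 1
  rw [sub_add_cancel, pow_fin_one hz] at h
  rw [h, mul_assoc, mul_inv_cancel₀ hz0, mul_one]

lemma torMat_det_complex (n : ℕ) [NeZero n] (e : ℝ) (ζ : ℂ) (hζ : IsPrimitiveRoot ζ n) :
    (((torMat (torNb n) e).det : ℝ) : ℂ) =
      ∏ w : Fin n × Fin n, ((e : ℂ) + 4 - ζ ^ (w.1 : ℕ) - (ζ ^ (w.1 : ℕ))⁻¹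
        - ζ ^ (w.2 : ℕ) - (ζ ^ (w.2 : ℕ))⁻¹) := by
  have hz : ∀ k : ℕ, (ζ ^ k) ^ n = 1 := fun k => by
    rw [← pow_mul, mul_comm, pow_mul, hζ.pow_eq_one, one_pow]
  let F : Matrix (Fin n) (Fin n) ℂ := (Matrix.vandermonde (fun i : Fin n => ζ ^ (i : ℕ))).transpose
  have hF : F.det ≠ 0 := by
    rw [Matrix.det_transpose, Matrix.det_vandermonde_ne_zero_iff]
    intro i j hij
    exact Fin.ext (hζ.pow_inj i.2 j.2 hij)
  have hFa : ∀ i j, F i j = (ζ ^ (j : ℕ)) ^ (i : ℕ) := fun i j => rfl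
  let K : Matrix (Fin n × Fin n) (Fin n × Fin n) ℂ := Matrix.kroneckerMap (fun x y => x * y) F F
  have hK : K.det ≠ 0 := by
    have := Matrix.det_kronecker F F
    rw [show K.det = _ from this]
    exact mul_ne_zero (pow_ne_zero _ hF) (pow_ne_zero _ hF)
  have hKa : ∀ v w, K v w = (ζ ^ (w.1 : ℕ)) ^ (v.1 : ℕ) * (ζ ^ (w.2 : ℕ)) ^ (v.2 : ℕ) :=
    fun v w => rfl
  let lam : Fin n × Fin n → ℂ := fun w => ((e : ℂ) + 4 - ζ ^ (w.1 : ℕ) - (ζ ^ (w.1 : ℕ))⁻¹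
        - ζ ^ (w.2 : ℕ) - (ζ ^ (w.2 : ℕ))⁻¹)
  have hmul : (torMat (torNb n) e).map (Complex.ofRealHom) * K = K * Matrix.diagonal lam := by
    ext v w
    rw [Matrix.mul_diagonal, Matrix.mul_apply]
    have : ∀ u, (torMat (torNb n) e).map (Complex.ofRealHom) v u =
        (e : ℂ) * (if v = u then 1 else 0) +
        ∑ d, ((if v = u then 1 else 0) - (if torNb n d v = u then 1 else 0)) := by
      intro u
      simp only [Matrix.map_apply, torMat, Complex.ofRealHom_eq_coe]
      push_cast
      have hi : ∀ (p : Prop) [Decidable p],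
          (((if p then 1 else 0 : ℝ)) : ℂ) = if p then 1 else 0 := by
        intro p _
        split_ifs <;> simp
      simp only [hi]
    simp only [this, Fin.sum_univ_four, add_mul, sub_mul, Finset.sum_add_distrib,
      Finset.sum_sub_distrib, mul_ite, ite_mul, one_mul, mul_one, zero_mul, mul_zero,
      Finset.sum_ite_eq, Finset.mem_univ, if_true]
    simp only [hKa, torNb, Matrix.cons_val, pow_fin_add (hz _), pow_fin_one (hz _),
      pow_fin_sub_one (hz _), lam]
    ring
  have h2 := congrArg Matrix.det hmul
  rw [Matrix.det_mul, Matrix.det_mul, mul_comm] at h2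
  have h3 := mul_left_cancel₀ hK h2
  rw [Matrix.det_diagonal] at h3
  rw [← h3]
  exact (RingHom.map_det Complex.ofRealHom _)

lemma prod_row (n : ℕ) [NeZero n] (ζ : ℂ) (hζ : IsPrimitiveRoot ζ n) (z : ℂ) (hz : z ≠ 0) :
    ∏ k : Fin n, (z + z⁻¹ - ζ ^ (k : ℕ) - (ζ ^ (k : ℕ))⁻¹) = (z ^ n - 1) ^ 2 / z ^ n := by
  have hpos : 0 < n := Nat.pos_of_ne_zero (NeZero.ne n)
  have h1 : ∀ ξ : ℂ, IsPrimitiveRoot ξ n → ∏ k : Fin n, (z - ξ ^ (k : ℕ)) = z ^ n - 1 := by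
    intro ξ hξ
    have h := hξ.pow_sub_pow_eq_prod_sub_mul z 1 hpos
    rw [one_pow] at h
    rw [h, Fin.prod_univ_eq_prod_range (fun k => z - ξ ^ k) n]
    refine Finset.prod_bij (fun k _ => ξ ^ k) ?_ ?_ ?_ ?_
    · intro k _
      rw [Polynomial.mem_nthRootsFinset hpos, ← pow_mul, mul_comm, pow_mul, hξ.pow_eq_one, one_pow]
    · intro i hi j hj hij
      exact hξ.pow_inj (Finset.mem_range.1 hi) (Finset.mem_range.1 hj) hij
    · intro b hb
      rw [Polynomial.mem_nthRootsFinset hpos] at hb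
      obtain ⟨i, hi, rfl⟩ := hξ.eq_pow_of_pow_eq_one hb
      exact ⟨i, Finset.mem_range.2 hi, rfl⟩
    · intro k _
      rw [mul_one]
  have h2 : ∀ k : Fin n, (z + z⁻¹ - ζ ^ (k : ℕ) - (ζ ^ (k : ℕ))⁻¹) =
      (z - ζ ^ (k : ℕ)) * (z - ζ⁻¹ ^ (k : ℕ)) * z⁻¹ := by
    intro k
    have : ζ ^ (k : ℕ) ≠ 0 := pow_ne_zero _ (hζ.ne_zero (NeZero.ne n))
    rw [inv_pow]
    field_simp
    ring
  simp_rw [h2]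
  rw [Finset.prod_mul_distrib, Finset.prod_mul_distrib, h1 _ hζ, h1 _ hζ.inv]
  simp
  field_simp

lemma torMat_det_le (n : ℕ) [NeZero n] (e : ℝ) (θ : Fin n → ℝ) (h0 : ∀ k, 0 ≤ θ k)
    (hθ : ∀ k : Fin n, 2 * Real.cosh (θ k) = e + 4 - 2 * Real.cos (2 * Real.pi * k / n)) :
    (torMat (torNb n) e).det ≤ Real.exp (n * ∑ k, θ k) := by
  have hn : n ≠ 0 := NeZero.ne n
  have hζ := Complex.isPrimitiveRoot_exp n hn
  set ζ := Complex.exp (2 * Real.pi * Complex.I / n) with hζd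
  have hc : ∀ k : ℕ, ζ ^ k + (ζ ^ k)⁻¹ = ((2 * Real.cos (2 * Real.pi * k / n) : ℝ) : ℂ) := by
    intro k
    rw [hζd, ← Complex.exp_nat_mul, ← Complex.exp_neg]
    push_cast
    rw [Complex.two_cos]
    congr 2 <;> ring
  have h := torMat_det_complex n e ζ hζ
  have h2 : (((torMat (torNb n) e).det : ℝ) : ℂ) =
      ((∏ k, ((Real.exp (θ k) ^ n - 1) ^ 2 / Real.exp (θ k) ^ n) : ℝ) : ℂ) := by
    rw [h, Fintype.prod_prod_type]
    push_cast
    refine Finset.prod_congr rfl fun k _ => ?_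
    rw [← prod_row n ζ hζ _ (Complex.exp_ne_zero _)]
    refine Finset.prod_congr rfl fun j _ => ?_
    have e1 : Complex.exp (θ k) + (Complex.exp (θ k))⁻¹ = (e : ℂ) + 4 - ζ ^ (k : ℕ) - (ζ ^ (k : ℕ))⁻¹ := by
      rw [sub_sub, hc k, ← Complex.exp_neg, ← Complex.two_cosh]
      have := hθ k
      exact_mod_cast congrArg (fun x : ℝ => (x : ℂ)) this
    rw [e1]
  rw [Complex.ofReal_inj.1 h2, Finset.mul_sum, Real.exp_sum]
  refine Finset.prod_le_prod (fun k _ => by positivity) fun k _ => ?_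
  rw [Real.exp_nat_mul]
  have h1 : 1 ≤ Real.exp (θ k) ^ n := one_le_pow₀ (Real.one_le_exp (h0 k))
  rw [div_le_iff₀ (by positivity)]
  nlinarith

lemma grid_adj_torNb (n : ℕ) [NeZero n] (v w : Fin n × Fin n) (h : (gridGraph n).Adj v w) :
    ∃ d, torNb n d v = w := by
  have key : ∀ a b : Fin n, (a : ℕ) + 1 = (b : ℕ) → a + 1 = b := by
    intro a b hab
    apply Fin.ext
    rw [Fin.val_add, Fin.val_one', Nat.add_mod_mod, hab, Nat.mod_eq_of_lt b.2]
  have key2 : ∀ a b : Fin n, (a : ℕ) + 1 = (b : ℕ) → b - 1 = a := by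
    intro a b hab
    rw [← key a b hab, add_sub_cancel_right]
  rw [gridGraph, SimpleGraph.fromRel_adj] at h
  obtain ⟨v1, v2⟩ := v
  obtain ⟨w1, w2⟩ := w
  rcases h.2 with (⟨h1, h2⟩ | ⟨h1, h2⟩) | (⟨h1, h2⟩ | ⟨h1, h2⟩) <;> dsimp only at h1 h2 <;> subst h1
  · exact ⟨2, by simp [torNb, key _ _ h2]⟩
  · exact ⟨0, by simp [torNb, key _ _ h2]⟩
  · exact ⟨3, by simp [torNb, key2 _ _ h2]⟩
  · exact ⟨1, by simp [torNb, key2 _ _ h2]⟩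

lemma exists_height {V : Type*} (G : SimpleGraph V) (s : Finset V)
    (hs : (G.induce (↑s : Set V)).Connected) :
    ∃ r ∈ s, ∃ H : V → ℕ, ∀ v ∈ s, v ≠ r → ∃ w ∈ s, G.Adj v w ∧ H w < H v := by
  classical
  obtain ⟨r, hr⟩ := hs.nonempty
  refine ⟨r, hr, fun v => if hv : v ∈ (↑s : Set V) then
    (G.induce (↑s : Set V)).dist ⟨v, hv⟩ ⟨r, hr⟩ else 0, ?_⟩
  intro v hv hvr
  have hv' : v ∈ (↑s : Set V) := hv
  obtain ⟨p, hp⟩ := hs.exists_walk_length_eq_dist ⟨v, hv'⟩ ⟨r, hr⟩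
  cases p with
  | nil => exact absurd rfl hvr
  | @cons _ w _ hadj q =>
    refine ⟨w.1, w.2, hadj, ?_⟩
    have h1 := SimpleGraph.dist_le q
    have h2 : w.1 ∈ (↑s : Set V) := w.2
    beta_reduce
    rw [dif_pos hv', dif_pos h2, ← hp, SimpleGraph.Walk.length_cons]
    exact Nat.lt_succ_of_le h1

/-- encoding of a partition by an acyclic choice function -/
def Encodes (n : ℕ) [NeZero n] (P : Finset (Finset (Fin n × Fin n)))
    (f : Fin n × Fin n → Option (Fin 4)) : Prop :=
  (∃ h : Fin n × Fin n → ℕ, ∀ v d, f v = some d → h (torNb n d v) < h v) ∧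
  (∀ v d, f v = some d → ∀ s ∈ P, v ∈ s → torNb n d v ∈ s) ∧
  (∀ s ∈ P, ∃ r ∈ s, ∀ v ∈ s, f v = none ↔ v = r)

lemma exists_encodes (n : ℕ) [NeZero n] (P : Finset (Finset (Fin n × Fin n)))
    (hP : IsGridPartition n P) : ∃ f, Encodes n P f := by
  classical
  obtain ⟨-, -, hconn, huniq⟩ := hP
  have hex : ∀ s, s ∈ P → ∃ r ∈ s, ∃ H : Fin n × Fin n → ℕ, ∀ v ∈ s, v ≠ r →
      ∃ d, torNb n d v ∈ s ∧ H (torNb n d v) < H v := by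
    intro s hs
    obtain ⟨r, hr, H, hH⟩ := exists_height (gridGraph n) s (hconn s hs)
    refine ⟨r, hr, H, fun v hv hvr => ?_⟩
    obtain ⟨w, hw, hadj, hlt⟩ := hH v hv hvr
    obtain ⟨d, rfl⟩ := grid_adj_torNb n v w hadj
    exact ⟨d, hw, hlt⟩
  choose! r hr H hH using hex
  choose p hp hpu using huniq
  have hpu' : ∀ v s, s ∈ P → v ∈ s → s = p v := fun v s h1 h2 => hpu v s ⟨h1, h2⟩
  have hd : ∀ v, ∃ o : Option (Fin 4), (o = none ↔ v = r (p v)) ∧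
      ∀ d, o = some d → torNb n d v ∈ p v ∧ H (p v) (torNb n d v) < H (p v) v := by
    intro v
    by_cases hv : v = r (p v)
    · exact ⟨none, by simp [← hv], by simp⟩
    · obtain ⟨d, hd⟩ := hH (p v) (hp v).1 v (hp v).2 hv
      refine ⟨some d, by simp [hv], ?_⟩
      intro d' hd'
      cases hd'
      exact hd
  choose f hf hfd using hd
  refine ⟨f, ⟨fun v => H (p v) v, ?_⟩, ?_, ?_⟩
  · intro v d hvd
    have h := hfd v d hvd
    have : p v = p (torNb n d v) := hpu' _ _ (hp v).1 h.1
    show H (p (torNb n d v)) _ < _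
    rw [← this]
    exact h.2
  · intro v d hvd s hs hv
    rw [hpu' v s hs hv]
    exact (hfd v d hvd).1
  · intro s hs
    refine ⟨r s, hr s hs, fun v hv => ?_⟩
    rw [hf v, ← hpu' v s hs hv]

lemma encodes_card (n : ℕ) [NeZero n] (P : Finset (Finset (Fin n × Fin n)))
    (hP : IsGridPartition n P) (f) (hf : Encodes n P f) :
    (Finset.univ.filter (fun v => f v = none)).card = n := by
  classical
  obtain ⟨hcard, -, -, huniq⟩ := hP
  obtain ⟨-, -, h3⟩ := hf
  choose! r hr hrn using h3
  conv_rhs => rw [← hcard]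
  symm
  refine Finset.card_bij (fun s _ => r s) ?_ ?_ ?_
  · intro s hs
    simpa using (hrn s hs (r s) (hr s hs)).2 rfl
  · intro s hs t ht hst
    exact (huniq (r s)).unique ⟨hs, hr s hs⟩ ⟨ht, by rw [show r s = r t from hst]; exact hr t ht⟩
  · intro v hv
    obtain ⟨s, ⟨hs, hvs⟩, -⟩ := huniq v
    exact ⟨s, hs, ((hrn s hs v hvs).1 (by simpa using hv)).symm⟩

lemma encodes_subset (n : ℕ) [NeZero n] (P Q : Finset (Finset (Fin n × Fin n)))
    (hP : IsGridPartition n P) (hQ : IsGridPartition n Q) (f)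
    (hfP : Encodes n P f) (hfQ : Encodes n Q f) (s t) (hs : s ∈ P) (ht : t ∈ Q)
    (v) (hvs : v ∈ s) (hvt : v ∈ t) : s ⊆ t := by
  classical
  obtain ⟨⟨h, hh⟩, hP2, hP3⟩ := hfP
  obtain ⟨-, hQ2, hQ3⟩ := hfQ
  obtain ⟨r, hr, hrn⟩ := hP3 s hs
  -- every vertex of `s` lies in the same part of `Q` as `r`
  have key : ∀ k, ∀ u, h u = k → u ∈ s → ∀ t' ∈ Q, u ∈ t' → r ∈ t' := by
    intro k
    induction k using Nat.strong_induction_on with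
    | _ k ih =>
      intro u hu hus t' ht' hut
      rcases hf : f u with _ | d
      · rw [← (hrn u hus).1 hf]; exact hut
      · exact ih _ (hu ▸ hh u d hf) _ rfl (hP2 u d hf s hs hus) t' ht' (hQ2 u d hf t' ht' hut)
  intro u hu
  obtain ⟨t', ⟨ht', hut⟩, -⟩ := hQ.2.2.2 u
  have h1 := key _ u rfl hu t' ht' hut
  have h2 := key _ v rfl hvs t ht hvt
  rw [(hQ.2.2.2 r).unique ⟨ht, h2⟩ ⟨ht', h1⟩]
  exact hut

lemma encodes_le (n : ℕ) [NeZero n] (P Q : Finset (Finset (Fin n × Fin n)))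
    (hP : IsGridPartition n P) (hQ : IsGridPartition n Q) (f)
    (hfP : Encodes n P f) (hfQ : Encodes n Q f) : P ⊆ Q := by
  intro s hs
  obtain ⟨v, hv, -⟩ := hfP.2.2 s hs
  obtain ⟨t, ⟨ht, hvt⟩, -⟩ := hQ.2.2.2 v
  have : s = t := Finset.Subset.antisymm
    (encodes_subset n P Q hP hQ f hfP hfQ s t hs ht v hv hvt)
    (encodes_subset n Q P hQ hP f hfQ hfP t s ht hs v hvt hv)
  rw [this]; exact ht

lemma integral_arctan_div :
    ∫ a in (0:ℝ)..1, Real.arctan a / a = catalanConst := by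
  have hIntegral : ∀ k : ℕ, ∫ a in Set.Ioc (0:ℝ) 1, a ^ (2 * k) / (2 * (k:ℝ) + 1)
      = 1 / (2 * (k : ℝ) + 1) ^ 2 := by
    intro k
    rw [← intervalIntegral.integral_of_le zero_le_one, intervalIntegral.integral_div, integral_pow]
    simp
    field_simp
  have h := MeasureTheory.hasSum_integral_of_summable_integral_norm
    (μ := MeasureTheory.volume.restrict (Set.Ioc (0:ℝ) 1))
    (F := fun (k : ℕ) (a : ℝ) => (-1) ^ k * (a ^ (2 * k) / (2 * (k:ℝ) + 1))) ?_ ?_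
  · rw [intervalIntegral.integral_of_le zero_le_one, catalanConst]
    have h1 : ∫ a in Set.Ioc (0:ℝ) 1, Real.arctan a / a =
        ∫ a in Set.Ioc (0:ℝ) 1, ∑' k : ℕ, (-1) ^ k * (a ^ (2 * k) / (2 * (k:ℝ) + 1)) := by
      rw [MeasureTheory.integral_Ioc_eq_integral_Ioo, MeasureTheory.integral_Ioc_eq_integral_Ioo]
      refine MeasureTheory.setIntegral_congr_fun measurableSet_Ioo ?_
      intro a ha
      have ha0 : a ≠ 0 := ha.1.ne'
      have := (Real.hasSum_arctan (x := a) (by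
        rw [Real.norm_eq_abs, abs_lt]; exact ⟨by linarith [ha.1], ha.2⟩)).div_const a
      beta_reduce
      rw [← this.tsum_eq]
      refine tsum_congr fun k => ?_
      push_cast
      field_simp
      ring
    rw [h1, ← h.tsum_eq]
    refine tsum_congr fun k => ?_
    rw [MeasureTheory.integral_const_mul, hIntegral]
    ring
  · intro k
    have : Continuous (fun a : ℝ => (-1) ^ k * (a ^ (2 * k) / (2 * (k:ℝ) + 1))) := by fun_prop
    exact (this.integrableOn_Icc (a := 0) (b := 1)).mono_set Set.Ioc_subset_Icc_self
  · have : ∀ k : ℕ, ∫ a in Set.Ioc (0:ℝ) 1, ‖(-1) ^ k * (a ^ (2 * k) / (2 * (k:ℝ) + 1))‖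
        = 1 / (2 * (k : ℝ) + 1) ^ 2 := by
      intro k
      rw [← hIntegral k]
      refine MeasureTheory.setIntegral_congr_fun measurableSet_Ioc ?_
      intro a ha
      have ha0 := ha.1
      simp only [norm_mul, norm_pow, norm_neg, norm_one, one_pow, one_mul]
      rw [Real.norm_of_nonneg]
      positivity
    simp_rw [this]
    have hs : Summable (fun k : ℕ => 1 / ((k : ℝ) + 1) ^ 2) := by
      have := (summable_nat_add_iff (f := fun k : ℕ => 1 / (k : ℝ) ^ 2) 1).2
        (Real.summable_one_div_nat_pow.2 one_lt_two)
      simpa using this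
    refine Summable.of_nonneg_of_le (fun k => by positivity) (fun k => ?_) hs
    have : (0:ℝ) ≤ k := Nat.cast_nonneg k
    gcongr
    linarith

lemma integral_sin_div (a : ℝ) (ha : a ≠ 0) :
    ∫ u in (0:ℝ)..Real.pi, Real.sin u * (√(1 + (a * Real.sin u) ^ 2))⁻¹
      = 2 * (Real.arctan a / a) := by
  have hq : ∀ u, 0 < 1 + (a * Real.sin u) ^ 2 := fun u => by positivity
  have hder : ∀ u, HasDerivAt (fun u => -(1 / a) * Real.arctan
      (a * Real.cos u / √(1 + (a * Real.sin u) ^ 2)))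
      (Real.sin u * (√(1 + (a * Real.sin u) ^ 2))⁻¹) u := by
    intro u
    have h1 : HasDerivAt (fun u => 1 + (a * Real.sin u) ^ 2)
        (2 * (a * Real.sin u) * (a * Real.cos u)) u := by
      have := (((Real.hasDerivAt_sin u).const_mul a).pow 2).const_add 1
      simpa using this
    have h2 := h1.sqrt (hq u).ne'
    have h3 := ((Real.hasDerivAt_cos u).const_mul a).div h2 (Real.sqrt_pos.2 (hq u)).ne'
    have h4 := (h3.arctan).const_mul (-(1 / a))
    refine h4.congr_deriv ?_
    have hs := Real.sq_sqrt (hq u).le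
    have hp := Real.sqrt_pos.2 (hq u)
    simp only [Pi.div_apply]
    set q := √(1 + (a * Real.sin u) ^ 2) with hqd
    have hsc := Real.sin_sq_add_cos_sq u
    have e1 : 1 + (a * Real.cos u / q) ^ 2 = (1 + a ^ 2) / q ^ 2 := by
      field_simp
      rw [hs]
      linear_combination a ^ 2 * hsc
    rw [e1]
    have hA : (1 + a ^ 2) ≠ 0 := by positivity
    field_simp
    rw [hs]
    linear_combination (a ^ 2 * Real.sin u) * hsc
  rw [intervalIntegral.integral_eq_sub_of_hasDerivAt (fun u _ => hder u)]
  · simp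
    ring_nf
  · apply Continuous.intervalIntegrable
    exact Real.continuous_sin.mul (Continuous.inv₀ (by fun_prop)
      (fun u => (Real.sqrt_pos.2 (hq u)).ne'))

lemma integral_arsinh_sin :
    ∫ u in (0:ℝ)..Real.pi, Real.arsinh (Real.sin u) = 2 * catalanConst := by
  have hcont : Continuous (fun p : ℝ × ℝ =>
      Real.sin p.1 * (√(1 + (p.2 * Real.sin p.1) ^ 2))⁻¹) := by
    refine Continuous.mul (by fun_prop) (Continuous.inv₀ (by fun_prop) (fun u => ?_))
    exact (Real.sqrt_pos.2 (by positivity)).ne'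
  have h1 : ∀ u : ℝ, Real.arsinh (Real.sin u) =
      ∫ a in (0:ℝ)..1, Real.sin u * (√(1 + (a * Real.sin u) ^ 2))⁻¹ := by
    intro u
    rw [intervalIntegral.integral_eq_sub_of_hasDerivAt (f := fun a => Real.arsinh (a * Real.sin u))]
    · simp
    · intro a _
      have := ((hasDerivAt_id a).mul_const (Real.sin u)).arsinh
      refine this.congr_deriv ?_
      simp [mul_comm]
    · exact (hcont.comp (Continuous.prodMk_right u)).intervalIntegrable _ _
  simp_rw [h1]
  rw [MeasureTheory.intervalIntegral_intervalIntegral_swap]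
  · rw [← integral_arctan_div, ← intervalIntegral.integral_const_mul]
    apply intervalIntegral.integral_congr_ae
    refine Filter.Eventually.of_forall fun a ha => ?_
    rw [Set.uIoc_of_le zero_le_one] at ha
    exact integral_sin_div a ha.1.ne'
  · refine (hcont.continuousOn.integrableOn_compact
      (isCompact_uIcc.prod isCompact_uIcc)).mono_set
      (Set.prod_mono Set.uIoc_subset_uIcc Set.uIoc_subset_uIcc)

lemma lip_arsinh : LipschitzWith 1 Real.arsinh := by
  apply lipschitzWith_of_nnnorm_deriv_le Real.differentiable_arsinh
  intro x
  rw [(Real.hasDerivAt_arsinh x).deriv, ← NNReal.coe_le_coe, coe_nnnorm,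
    Real.norm_of_nonneg (by positivity)]
  apply inv_le_one_of_one_le₀
  rw [Real.one_le_sqrt]
  nlinarith [sq_nonneg x]

lemma arsinh_le_add {x y : ℝ} (h : x ≤ y) : Real.arsinh y ≤ Real.arsinh x + (y - x) := by
  have := lip_arsinh.dist_le_mul y x
  rw [Real.dist_eq, Real.dist_eq, abs_of_nonneg (sub_nonneg.2 h)] at this
  have h2 := le_abs_self (Real.arsinh y - Real.arsinh x)
  simp at this
  linarith

lemma lip_arsinh_sin (x y : ℝ) (h : x ≤ y) :
    Real.arsinh (Real.sin x) ≤ Real.arsinh (Real.sin y) + (y - x) := by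
  have h1 := (lip_arsinh.comp Real.lipschitzWith_sin).dist_le_mul x y
  rw [Real.dist_eq, Real.dist_eq, abs_sub_comm x y, abs_of_nonneg (sub_nonneg.2 h)] at h1
  have h2 := le_abs_self (Real.arsinh (Real.sin x) - Real.arsinh (Real.sin y))
  simp at h1
  linarith

lemma sum_arsinh_sin (n : ℕ) (hn : 0 < n) :
    ∑ k : Fin n, Real.arsinh (Real.sin (Real.pi * k / n)) ≤
      n * (2 * catalanConst / Real.pi) + Real.pi := by
  have hn' : (0:ℝ) < n := Nat.cast_pos.2 hn
  have hpi := Real.pi_pos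
  rw [Fin.sum_univ_eq_sum_range (fun k => Real.arsinh (Real.sin (Real.pi * k / n))) n]
  have hc : Continuous (fun u => Real.arsinh (Real.sin u)) :=
    Real.continuous_arsinh.comp Real.continuous_sin
  have hadj := intervalIntegral.sum_integral_adjacent_intervals (μ := MeasureTheory.volume)
    (f := fun u => Real.arsinh (Real.sin u)) (a := fun k : ℕ => Real.pi * k / n) (n := n)
    (fun k _ => hc.intervalIntegrable _ _)
  have e0 : Real.pi * ((0:ℕ) : ℝ) / n = 0 := by simp
  have e1 : Real.pi * (n : ℝ) / n = Real.pi := by field_simp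
  simp only [e0, e1, integral_arsinh_sin] at hadj
  have hk : ∀ k : ℕ, (Real.pi / n) * Real.arsinh (Real.sin (Real.pi * k / n)) ≤
      (∫ u in (Real.pi * k / n)..(Real.pi * (k + 1 : ℕ) / n), Real.arsinh (Real.sin u))
        + (Real.pi / n) ^ 2 := by
    intro k
    have hd : Real.pi * (k + 1 : ℕ) / n - Real.pi * k / n = Real.pi / n := by
      push_cast; ring
    have hpn : 0 < Real.pi / n := by positivity
    have hle : Real.pi * k / n ≤ Real.pi * (k + 1 : ℕ) / n := by linarith
    have := intervalIntegral.integral_mono_on (μ := MeasureTheory.volume) hle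
      (f := fun _ => Real.arsinh (Real.sin (Real.pi * k / n)) - Real.pi / n)
      (g := fun u => Real.arsinh (Real.sin u)) (continuous_const.intervalIntegrable _ _)
      (hc.intervalIntegrable _ _) (fun u hu => by
        have := lip_arsinh_sin _ u hu.1
        have := hu.2
        linarith)
    rw [intervalIntegral.integral_const, hd, smul_eq_mul] at this
    linarith
  have hs := Finset.sum_le_sum (fun k (_ : k ∈ Finset.range n) => hk k)
  rw [← Finset.mul_sum, Finset.sum_add_distrib, hadj] at hs
  simp only [Finset.sum_const, Finset.card_range, nsmul_eq_mul] at hs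
  have h3 : (n / Real.pi) * (Real.pi / n * ∑ k ∈ Finset.range n, Real.arsinh (Real.sin (Real.pi * k / n)))
     ≤ (n / Real.pi) * (2 * catalanConst + n * (Real.pi / n) ^ 2) := by gcongr
  have h4 : (n / Real.pi) * (Real.pi / n * ∑ k ∈ Finset.range n, Real.arsinh (Real.sin (Real.pi * k / n)))
     = ∑ k ∈ Finset.range n, Real.arsinh (Real.sin (Real.pi * k / n)) := by field_simp
  have h5 : (n / Real.pi) * (2 * catalanConst + n * (Real.pi / n) ^ 2) =
    n * (2 * catalanConst / Real.pi) + Real.pi := by field_simp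
  linarith

lemma gridPartitionCount_le (n : ℕ) (hn : 0 < n) :
    (gridPartitionCount n : ℝ) ≤
      Real.exp ((n : ℝ) ^ 2 * (2 * (Real.log n / n) + 4 * catalanConst / Real.pi
        + (2 * Real.pi + 1) / n)) := by
  classical
  have : NeZero n := ⟨hn.ne'⟩
  have hn' : (0:ℝ) < n := Nat.cast_pos.2 hn
  set e : ℝ := 1 / (n : ℝ) ^ 2 with he
  have hepos : 0 < e := by positivity
  -- the combinatorial bound
  have hcount : (gridPartitionCount n : ℝ) * e ^ n ≤ (torMat (torNb n) e).det := by
    have hex : ∀ P : {P : Finset (Finset (Fin n × Fin n)) // IsGridPartition n P},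
        ∃ f, Encodes n P.1 f := fun P => exists_encodes n P.1 P.2
    choose F hF using hex
    rw [gridPartitionCount, Nat.card_eq_fintype_card]
    refine count_le_det (torNb n) e hepos.le n F ?_ (fun P => (hF P).1)
      (fun P => encodes_card n P.1 P.2 _ (hF P))
    intro P Q hPQ
    have hQ := hF Q
    rw [← hPQ] at hQ
    exact Subtype.ext (Finset.Subset.antisymm (encodes_le n _ _ P.2 Q.2 _ (hF P) hQ)
      (encodes_le n _ _ Q.2 P.2 _ hQ (hF P)))
  -- the determinant bound
  let θ : Fin n → ℝ := fun k =>
    2 * Real.arsinh (√(Real.sin (Real.pi * k / n) ^ 2 + e / 4))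
  have hdet : (torMat (torNb n) e).det ≤ Real.exp (n * ∑ k, θ k) := by
    refine torMat_det_le n e θ (fun k => ?_) (fun k => ?_)
    · have := Real.arsinh_nonneg_iff.2 (Real.sqrt_nonneg (Real.sin (Real.pi * k / n) ^ 2 + e / 4))
      simp only [θ]
      linarith
    · simp only [θ]
      rw [Real.cosh_two_mul, Real.cosh_sq, Real.sinh_arsinh, Real.sq_sqrt (by positivity),
        show 2 * Real.pi * (k : ℝ) / n = 2 * (Real.pi * k / n) by ring, Real.cos_two_mul]
      have := Real.sin_sq_add_cos_sq (Real.pi * k / n)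
      linear_combination 4 * this
  have hθ : ∀ k : Fin n, θ k ≤ 2 * Real.arsinh (Real.sin (Real.pi * k / n)) + 1 / n := by
    intro k
    have hk : (k : ℝ) ≤ n := by exact_mod_cast k.2.le
    have hs : 0 ≤ Real.sin (Real.pi * k / n) := by
      apply Real.sin_nonneg_of_nonneg_of_le_pi
      · have := Real.pi_pos; positivity
      · rw [div_le_iff₀ hn']
        have := Real.pi_pos
        gcongr
    set s := Real.sin (Real.pi * k / n) with hsd
    have h1 : √(s ^ 2 + e / 4) ≤ s + 1 / (2 * n) := by
      rw [Real.sqrt_le_left (by positivity)]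
      have h4 : e / 4 = (1 / (2 * (n:ℝ))) ^ 2 := by rw [he]; field_simp; norm_num
      have h5 : 0 ≤ s * (1 / (2 * (n:ℝ))) := by positivity
      rw [h4]
      nlinarith
    have h2 : Real.arsinh (√(s ^ 2 + e / 4)) ≤ Real.arsinh (s + 1 / (2 * n)) :=
      Real.arsinh_le_arsinh.2 h1
    have h3 := arsinh_le_add (x := s) (y := s + 1 / (2 * (n:ℝ)))
      (by have : 0 ≤ 1 / (2 * (n:ℝ)) := by positivity
          linarith)
    have h4 : 2 * (1 / (2 * (n:ℝ))) = 1 / n := by field_simp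
    simp only [θ]
    linarith
  have hsum : ∑ k, θ k ≤ 2 * (n * (2 * catalanConst / Real.pi) + Real.pi) + 1 := by
    have h1 := Finset.sum_le_sum (fun k (_ : k ∈ Finset.univ) => hθ k)
    rw [Finset.sum_add_distrib] at h1
    have h4 := (Finset.mul_sum Finset.univ (fun k : Fin n => Real.arsinh (Real.sin (Real.pi * k / n))) 2)
    have h2 := sum_arsinh_sin n hn
    have h3 : ∑ _k : Fin n, 1 / (n : ℝ) = 1 := by
      simp [hn'.ne']
    rw [h3, ← h4] at h1
    linarith
  have htot := hcount.trans hdet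
  have hen : Real.exp (2 * n * Real.log n) * e ^ n = 1 := by
    have : Real.exp (2 * n * Real.log n) = ((n:ℝ) ^ 2) ^ n := by
      rw [show 2 * (n:ℝ) * Real.log n = (n : ℝ) * (((2:ℕ) : ℝ) * Real.log n) by push_cast; ring,
        Real.exp_nat_mul, Real.exp_nat_mul, Real.exp_log hn']
    rw [this, he, ← mul_pow, mul_one_div_cancel (by positivity), one_pow]
  calc (gridPartitionCount n : ℝ)
      = Real.exp (2 * n * Real.log n) * ((gridPartitionCount n : ℝ) * e ^ n) := by
        rw [mul_left_comm, hen, mul_one]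
    _ ≤ Real.exp (2 * n * Real.log n) * Real.exp (n * ∑ k, θ k) := by gcongr
    _ = Real.exp (2 * n * Real.log n + n * ∑ k, θ k) := (Real.exp_add _ _).symm
    _ ≤ _ := by
        apply Real.exp_le_exp.2
        have h1 : (n:ℝ) * ∑ k, θ k ≤ n * (2 * (n * (2 * catalanConst / Real.pi) + Real.pi) + 1) := by
          gcongr
        have h2 : (n : ℝ) ^ 2 * (2 * (Real.log n / n) + 4 * catalanConst / Real.pi
            + (2 * Real.pi + 1) / n) = 2 * n * Real.log n +
            n * (2 * (n * (2 * catalanConst / Real.pi) + Real.pi) + 1) := by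
          field_simp
          ring
        linarith

theorem grid_partition_count_upper :
    limsup (fun n : ℕ => (gridPartitionCount n : ℝ) ^ (1 / (n : ℝ) ^ 2)) atTop ≤
      Real.exp (4 * catalanConst / Real.pi) := by
  have hlim : Tendsto (fun n : ℕ => Real.exp (2 * (Real.log n / n) + 4 * catalanConst / Real.pi
        + (2 * Real.pi + 1) / n)) atTop (nhds (Real.exp (4 * catalanConst / Real.pi))) := by
    have h1 : Tendsto (fun n : ℕ => Real.log n / n) atTop (nhds 0) := by
      have := (Real.isLittleO_log_id_atTop.tendsto_div_nhds_zero).comp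
        (tendsto_natCast_atTop_atTop (R := ℝ))
      exact this
    have h2 : Tendsto (fun n : ℕ => (2 * Real.pi + 1) / (n : ℝ)) atTop (nhds 0) :=
      tendsto_const_div_atTop_nhds_zero_nat _
    have h3 := ((h1.const_mul 2).add_const (4 * catalanConst / Real.pi)).add h2
    simp only [mul_zero, zero_add, add_zero] at h3
    exact (Real.continuous_exp.tendsto _).comp h3
  rw [← hlim.limsup_eq]
  refine limsup_le_limsup ?_ ?_ hlim.isBoundedUnder_le
  · filter_upwards [eventually_gt_atTop 0] with n hn
    have hn' : (0:ℝ) < n := Nat.cast_pos.2 hn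
    have h := Real.rpow_le_rpow (Nat.cast_nonneg _) (gridPartitionCount_le n hn)
      (z := 1 / (n : ℝ) ^ 2) (by positivity)
    refine h.trans (le_of_eq ?_)
    rw [← Real.exp_mul]
    congr 1
    field_simp
  · refine IsCoboundedUnder.of_frequently_ge (a := 0) (Frequently.of_forall fun n => ?_)
    positivity
end

section
/- Let $P_n$ denote the number of partitions of the vertex set of the $n\times n$ grid graph into $n$ parts, each of size $n$ and each inducing a connected subgraph. Then $\liminf_{n\to\infty} P_n^{1/n^2} \ge 3^{1/6}$. -/
open Filter

/-- Which half (0 = left, 1 = right) the cell belongs to. -/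
def gpSide (n i j : ℕ) : ℕ :=
  if j < n / 2 then 0 else if n - n / 2 ≤ j then 1
  else if i % 4 = 0 ∨ i % 4 = 3 then 0 else 1

/-- Distance from the outer boundary column of the half. -/
def gpRefl (n s j : ℕ) : ℕ := if s = 0 then j else n - 1 - j

/-- Label of the district containing a cell. -/
def gpLab (n : ℕ) (X : ℕ → ℕ → ℕ → ℕ) (i j : ℕ) : ℕ :=
  if i < 4 * (n / 4) then
    4 * (i / 4) + 2 * gpSide n i j +
      (if i % 4 ≤ X (i / 4) (gpSide n i j) (gpRefl n (gpSide n i j) j) then 0 else 1)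
  else i

/-- Measure decreasing towards the root of each district. -/
def gpMu (n : ℕ) (X : ℕ → ℕ → ℕ → ℕ) (i j : ℕ) : ℕ :=
  if i < 4 * (n / 4) then
    4 * gpRefl n (gpSide n i j) j +
      (if i % 4 ≤ X (i / 4) (gpSide n i j) (gpRefl n (gpSide n i j) j) then i % 4 else 3 - i % 4)
  else j

/-- Admissible profile functions. -/
structure GpGood (n : ℕ) (X : ℕ → ℕ → ℕ → ℕ) : Prop where
  le_two : ∀ b s j, X b s j ≤ 2
  eq_one : ∀ b s j, 4 * ((n - 2) / 8) ≤ j → X b s j = 1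
  sum_eq : ∀ b s, ∑ j ∈ Finset.range (n / 2), X b s j = n / 2

lemma gpLab_lt (n : ℕ) (X : ℕ → ℕ → ℕ → ℕ) (i j : ℕ) (hi : i < n) : gpLab n X i j < n := by
  have : gpSide n i j ≤ 1 := by unfold gpSide; split_ifs <;> omega
  unfold gpLab
  split_ifs <;> omega

def gpRootI (n l : ℕ) : ℕ := if l < 4 * (n / 4) then 4 * (l / 4) + 3 * (l % 2) else l
def gpRootJ (n l : ℕ) : ℕ := if l < 4 * (n / 4) then (if l / 2 % 2 = 0 then 0 else n - 1) else 0

lemma gpRoot_lab (n : ℕ) (X : ℕ → ℕ → ℕ → ℕ) (hX : GpGood n X) (hn : 2 ≤ n) (l : ℕ) :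
    gpLab n X (gpRootI n l) (gpRootJ n l) = l := by
  have h2 := hX.le_two
  unfold gpLab gpRootI gpRootJ
  by_cases hl : l < 4 * (n / 4)
  · simp only [hl, if_true]
    have e1 : (4 * (l / 4) + 3 * (l % 2)) / 4 = l / 4 := by omega
    have e2 : (4 * (l / 4) + 3 * (l % 2)) % 4 = 3 * (l % 2) := by omega
    rw [if_pos (by omega), e1, e2]
    rcases Nat.mod_two_eq_zero_or_one (l / 2) with h | h
    · have : gpSide n (4 * (l / 4) + 3 * (l % 2)) 0 = 0 := by
        unfold gpSide; rw [if_pos (by omega)]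
      simp only [h, if_true, this]
      have := h2 (l / 4) 0 (gpRefl n 0 0)
      split_ifs <;> omega
    · have : gpSide n (4 * (l / 4) + 3 * (l % 2)) (n - 1) = 1 := by
        unfold gpSide; rw [if_neg (by omega), if_pos (by omega)]
      simp only [h, one_ne_zero, if_false, this]
      have := h2 (l / 4) 1 (gpRefl n 1 (n - 1))
      split_ifs <;> omega
  · simp [hl]

/-- value of label and measure on band cells -/
lemma gp_eval (n : ℕ) (X : ℕ → ℕ → ℕ → ℕ) (b r j s jj : ℕ) (hb : b < n / 4) (hr : r < 4)
    (hs : gpSide n r j = s) (hj : gpRefl n s j = jj) :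
    gpLab n X (4 * b + r) j = 4 * b + 2 * s + (if r ≤ X b s jj then 0 else 1) ∧
    gpMu n X (4 * b + r) j = 4 * jj + (if r ≤ X b s jj then r else 3 - r) := by
  have e1 : (4 * b + r) / 4 = b := by omega
  have e2 : (4 * b + r) % 4 = r := by omega
  have e3 : gpSide n (4 * b + r) j = s := by
    rw [← hs]; unfold gpSide
    rw [e2, Nat.mod_eq_of_lt hr]
  unfold gpLab gpMu
  have hlt : 4 * b + r < 4 * (n / 4) := by omega
  simp only [hlt, if_true, e1, e2, e3, hj]
  exact ⟨trivial, trivial⟩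

lemma gp_step (n : ℕ) (X : ℕ → ℕ → ℕ → ℕ) (hX : GpGood n X) (hn : 2 ≤ n) (i j : ℕ)
    (hi : i < n) (hj : j < n) :
    (i = gpRootI n (gpLab n X i j) ∧ j = gpRootJ n (gpLab n X i j)) ∨
    ∃ i' j', i' < n ∧ j' < n ∧
      ((i = i' ∧ (j + 1 = j' ∨ j' + 1 = j)) ∨ (j = j' ∧ (i + 1 = i' ∨ i' + 1 = i))) ∧
      gpLab n X i' j' = gpLab n X i j ∧ gpMu n X i' j' < gpMu n X i j := by
  by_cases hb : i < 4 * (n / 4)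
  · obtain ⟨b, r, hr, rfl⟩ : ∃ b r, r < 4 ∧ i = 4 * b + r :=
      ⟨i / 4, i % 4, Nat.mod_lt _ (by norm_num), by omega⟩
    have hb' : b < n / 4 := by omega
    have h2 := hX.le_two
    have hs01 : gpSide n r j = 0 ∨ gpSide n r j = 1 := by unfold gpSide; split_ifs <;> simp
    -- general data
    obtain ⟨s, hs⟩ : ∃ s, gpSide n r j = s := ⟨_, rfl⟩
    obtain ⟨jj, hjj⟩ : ∃ jj, gpRefl n s j = jj := ⟨_, rfl⟩
    obtain ⟨eL, eM⟩ := gp_eval n X b r j s jj hb' hr hs hjj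
    have hx := h2 b s jj
    have hs1 : s = 0 ∨ s = 1 := by omega
    by_cases hvert : (r = 1 ∨ r = 2) ∧ (j < n / 2 ∨ n - n / 2 ≤ j)
    · -- vertical move
      right
      obtain ⟨hr12, hjm⟩ := hvert
      have hsame : ∀ r', gpSide n r' j = s := by
        intro r'; rw [← hs]; unfold gpSide
        rcases hjm with h | h
        · simp [h]
        · rw [if_neg (by omega), if_pos h, if_neg (by omega), if_pos h]
      by_cases ht : r ≤ X b s jj
      · obtain ⟨fL, fM⟩ := gp_eval n X b (r - 1) j s jj hb' (by omega) (hsame _) hjj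
        refine ⟨4 * b + (r - 1), j, by omega, hj, by omega, ?_, ?_⟩
        · rw [fL, eL, if_pos ht, if_pos (by omega)]
        · rw [fM, eM, if_pos ht, if_pos (by omega)]; omega
      · obtain ⟨fL, fM⟩ := gp_eval n X b (r + 1) j s jj hb' (by omega) (hsame _) hjj
        refine ⟨4 * b + (r + 1), j, by omega, hj, by omega, ?_, ?_⟩
        · rw [fL, eL, if_neg ht, if_neg (by omega)]
        · rw [fM, eM, if_neg ht, if_neg (by omega)]; omega
    · by_cases hroot : jj = 0
      · left
        rw [eL]
        have hr03 : r = 0 ∨ r = 3 := by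
          unfold gpSide at hs; unfold gpRefl at hjj
          split_ifs at hs hjj <;> omega
        have hj0 : (s = 0 ∧ j = 0) ∨ (s = 1 ∧ j = n - 1) := by
          unfold gpRefl at hjj
          split_ifs at hjj <;> omega
        clear eL eM
        unfold gpRootI gpRootJ
        split_ifs <;> omega
      · right
        -- horizontal move
        have key : ∃ j', j' < n ∧ (j + 1 = j' ∨ j' + 1 = j) ∧ gpSide n r j' = s ∧
            gpRefl n s j' = jj - 1 := by
          unfold gpSide at hs; unfold gpRefl at hjj
          rcases hs1 with rfl | rfl
          · refine ⟨j - 1, ?_⟩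
            unfold gpSide gpRefl
            simp only [if_true] at hjj ⊢
            refine ⟨by omega, by omega, ?_, by omega⟩
            split_ifs at hs ⊢ <;> omega
          · refine ⟨j + 1, ?_⟩
            unfold gpSide gpRefl
            simp only [one_ne_zero, if_false] at hjj ⊢
            have hjn : ¬ j < n / 2 := by
              intro h; rw [if_pos h] at hs; omega
            refine ⟨by omega, by simp, ?_, by omega⟩
            rw [if_neg (show ¬ j + 1 < n / 2 by omega), if_pos (show n - n / 2 ≤ j + 1 by omega)]
        obtain ⟨j', hj', hadj, hs', hjj'⟩ := key
        obtain ⟨fL, fM⟩ := gp_eval n X b r j' s (jj - 1) hb' hr hs' hjj'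
        have hx' := h2 b s (jj - 1)
        have hiff : (r ≤ X b s (jj - 1)) ↔ (r ≤ X b s jj) := by
          by_cases hr03 : r = 0 ∨ r = 3
          · omega
          · have : n / 2 ≤ jj := by
              unfold gpRefl at hjj
              split_ifs at hjj <;> omega
            rw [hX.eq_one b s jj (by omega), hX.eq_one b s (jj - 1) (by omega)]
        refine ⟨4 * b + r, j', hi, hj', by omega, ?_, ?_⟩
        · rw [fL, eL]; simp only [hiff]
        · rw [fM, eM]; simp only [hiff]; omega
  · have hl : ∀ j, gpLab n X i j = i := by intro j; unfold gpLab; rw [if_neg hb]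
    have hm : ∀ j, gpMu n X i j = j := by intro j; unfold gpMu; rw [if_neg hb]
    by_cases h0 : j = 0
    · left; rw [hl]; unfold gpRootI gpRootJ; simp [hb, h0]
    · right
      exact ⟨i, j - 1, hi, by omega, by omega, by rw [hl, hl], by rw [hm, hm]; omega⟩

/-- Column profile of a district. -/
lemma gp_col (n : ℕ) (X : ℕ → ℕ → ℕ → ℕ) (hX : GpGood n X) (hn : 2 ≤ n) (b s t j : ℕ)
    (hb : b < n / 4) (hs : s < 2) (ht : t < 2) (hj : j < n) :
    ∑ i ∈ Finset.range n, (if gpLab n X i j = 4 * b + 2 * s + t then 1 else 0) =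
      (if gpRefl n s j < n / 2 then
        (if t = 0 then 1 + X b s (gpRefl n s j) else 3 - X b s (gpRefl n s j))
       else if gpRefl n s j < n - n / 2 then 1 else 0) := by
  have hside : ∀ i, gpSide n i j ≤ 1 := by intro i; unfold gpSide; split_ifs <;> omega
  have hzero : ∀ i ∈ Finset.range n, i ∉ Finset.Ico (4 * b) (4 * b + 4) →
      (if gpLab n X i j = 4 * b + 2 * s + t then 1 else 0) = 0 := by
    intro i _ hi'
    rw [Finset.mem_Ico] at hi'
    rw [if_neg]
    have := hside i
    unfold gpLab
    split_ifs <;> omega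
  have hsub : Finset.Ico (4 * b) (4 * b + 4) ⊆ Finset.range n := by
    intro i hi; rw [Finset.mem_Ico] at hi; rw [Finset.mem_range]; omega
  rw [← Finset.sum_subset hsub hzero, Finset.sum_Ico_eq_sum_range]
  have : 4 * b + 4 - 4 * b = 4 := by omega
  rw [this]
  simp only [Finset.sum_range_succ, Finset.sum_range_zero]
  have ev : ∀ r, r < 4 → _ := fun r hr => (gp_eval n X b r j _ _ hb hr rfl rfl).1
  rw [ev 0 (by norm_num), ev 1 (by norm_num), ev 2 (by norm_num), ev 3 (by norm_num)]
  have h2 := hX.le_two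
  by_cases hmid : j < n / 2 ∨ n - n / 2 ≤ j
  · obtain ⟨s', hs', hs'1⟩ : ∃ s', (∀ r, gpSide n r j = s') ∧ ((s' = 0 ∧ j < n / 2) ∨ (s' = 1 ∧ n - n / 2 ≤ j)) := by
      unfold gpSide
      rcases hmid with h | h
      · exact ⟨0, by simp [h], by omega⟩
      · refine ⟨1, fun r => ?_, by omega⟩
        rw [if_neg (by omega), if_pos h]
    simp only [hs']
    by_cases hss : s' = s
    · subst hss
      have hx := h2 b s' (gpRefl n s' j)
      have : gpRefl n s' j < n / 2 := by unfold gpRefl; split_ifs <;> omega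
      rw [if_pos this]
      generalize X b s' (gpRefl n s' j) = x at hx ⊢
      interval_cases x <;> interval_cases t <;> simp
    · have : ¬ gpRefl n s j < n / 2 := by unfold gpRefl; split_ifs <;> omega
      have this2 : ¬ gpRefl n s j < n - n / 2 := by
        unfold gpRefl; split_ifs <;> omega
      rw [if_neg this, if_neg this2]
      rw [if_neg, if_neg, if_neg, if_neg] <;> split_ifs <;> omega
  · have s0 : gpSide n 0 j = 0 := by
      unfold gpSide; rw [if_neg (show ¬ j < n / 2 by omega), if_neg (show ¬ n - n / 2 ≤ j by omega)]; norm_num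
    have s1 : gpSide n 1 j = 1 := by
      unfold gpSide; rw [if_neg (show ¬ j < n / 2 by omega), if_neg (show ¬ n - n / 2 ≤ j by omega)]; norm_num
    have s2 : gpSide n 2 j = 1 := by
      unfold gpSide; rw [if_neg (show ¬ j < n / 2 by omega), if_neg (show ¬ n - n / 2 ≤ j by omega)]; norm_num
    have s3 : gpSide n 3 j = 0 := by
      unfold gpSide; rw [if_neg (show ¬ j < n / 2 by omega), if_neg (show ¬ n - n / 2 ≤ j by omega)]; norm_num
    have hr : ∀ s, n / 2 ≤ gpRefl n s j ∧ gpRefl n s j < n - n / 2 := by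
      intro s; unfold gpRefl; split_ifs <;> omega
    have hx : ∀ s, X b s (gpRefl n s j) = 1 := fun s =>
      hX.eq_one b s _ (by have := (hr s).1; omega)
    have hr1 : ¬ gpRefl n s j < n / 2 := by have := (hr s).1; omega
    rw [s0, s1, s2, s3, hx, hx, if_neg hr1, if_pos (hr s).2]
    clear hr1 hr hx hzero
    interval_cases s <;> interval_cases t <;> simp <;> omega

lemma gp_count (n : ℕ) (X : ℕ → ℕ → ℕ → ℕ) (hX : GpGood n X) (hn : 2 ≤ n) (l : ℕ) (hl : l < n) :
    ∑ j ∈ Finset.range n, ∑ i ∈ Finset.range n, (if gpLab n X i j = l then 1 else 0) = n := by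
  by_cases hl4 : l < 4 * (n / 4)
  · obtain ⟨b, s, t, hs, ht, hb, rfl⟩ : ∃ b s t, s < 2 ∧ t < 2 ∧ b < n / 4 ∧ l = 4 * b + 2 * s + t :=
      ⟨l / 4, l / 2 % 2, l % 2, by omega, by omega, by omega, by omega⟩
    rw [Finset.sum_congr rfl (fun j hj => gp_col n X hX hn b s t j hb hs ht (Finset.mem_range.1 hj))]
    set G : ℕ → ℕ := fun j => if j < n / 2 then
        (if t = 0 then 1 + X b s j else 3 - X b s j)
       else if j < n - n / 2 then 1 else 0 with hG
    change ∑ j ∈ Finset.range n, G (gpRefl n s j) = n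
    have e1 : ∑ j ∈ Finset.range n, G (gpRefl n s j) = ∑ j ∈ Finset.range n, G j := by
      unfold gpRefl
      interval_cases s
      · simp
      · simpa using Finset.sum_range_reflect G n
    have hsum := hX.sum_eq b s
    have e2 : ∑ j ∈ Finset.range (n / 2), G j = 2 * (n / 2) := by
      have : ∑ j ∈ Finset.range (n / 2), G j =
          ∑ j ∈ Finset.range (n / 2), (if t = 0 then 1 + X b s j else 3 - X b s j) := by
        refine Finset.sum_congr rfl fun j hj => ?_
        simp only [hG]; rw [if_pos (Finset.mem_range.1 hj)]
      rw [this]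
      interval_cases t
      · simp [Finset.sum_add_distrib, hsum]; omega
      · simp only [one_ne_zero, if_false]
        have : ∑ j ∈ Finset.range (n / 2), (3 - X b s j) + ∑ j ∈ Finset.range (n / 2), X b s j
            = 3 * (n / 2) := by
          rw [← Finset.sum_add_distrib, Finset.sum_congr rfl (g := fun _ => 3)]
          · simp; omega
          · intro j _; have := hX.le_two b s j; omega
        omega
    rw [e1]
    rcases Nat.even_or_odd' n with ⟨k, hk | hk⟩
    · have hk2 : n / 2 = k := by omega
      have : n = n / 2 + n / 2 := by omega
      conv_lhs => rw [this]
      rw [Finset.sum_range_add, e2, Finset.sum_eq_zero]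
      · omega
      · intro j _; simp only [hG]
        rw [if_neg (by omega), if_neg (by omega)]
    · have : n = (n / 2 + 1) + n / 2 := by omega
      conv_lhs => rw [this]
      rw [Finset.sum_range_add, Finset.sum_range_succ, e2, Finset.sum_eq_zero (s := Finset.range (n/2))]
      · simp only [hG]
        rw [if_neg (by omega), if_pos (by omega)]; omega
      · intro j _; simp only [hG]
        rw [if_neg (by omega), if_neg (by omega)]
  · have : ∀ j ∈ Finset.range n, ∑ i ∈ Finset.range n, (if gpLab n X i j = l then 1 else 0) = 1 := by
      intro j _
      have : ∀ i ∈ Finset.range n, (if gpLab n X i j = l then 1 else 0) = if i = l then 1 else 0 := by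
        intro i _
        have hside : gpSide n i j ≤ 1 := by unfold gpSide; split_ifs <;> omega
        have : gpLab n X i j = l ↔ i = l := by
          unfold gpLab; split_ifs <;> omega
        simp only [this]
      rw [Finset.sum_congr rfl this]
      simp [hl]
    rw [Finset.sum_congr rfl this]; simp

lemma gridGraph_adj_iff (n : ℕ) (a b : Fin n × Fin n) : (gridGraph n).Adj a b ↔
    ((a.1 = b.1 ∧ ((a.2 : ℕ) + 1 = b.2 ∨ (b.2 : ℕ) + 1 = a.2)) ∨
     (a.2 = b.2 ∧ ((a.1 : ℕ) + 1 = b.1 ∨ (b.1 : ℕ) + 1 = a.1))) := by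
  unfold gridGraph
  rw [SimpleGraph.fromRel_adj]
  constructor
  · rintro ⟨_, (⟨h, h'⟩ | ⟨h, h'⟩) | (⟨h, h'⟩ | ⟨h, h'⟩)⟩ <;> simp [h, h']
  · intro h
    refine ⟨?_, ?_⟩
    · rintro rfl; omega
    · rcases h with ⟨h, h' | h'⟩ | ⟨h, h' | h'⟩ <;> simp [h, h']

lemma gp_connected {V : Type*} (G : SimpleGraph V) (S : Set V) (root : V) (hroot : root ∈ S)
    (mu : V → ℕ) (h : ∀ v ∈ S, v = root ∨ ∃ w ∈ S, G.Adj v w ∧ mu w < mu v) :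
    (G.induce S).Connected := by
  have key : ∀ k, ∀ v (hv : v ∈ S), mu v ≤ k → (G.induce S).Reachable ⟨v, hv⟩ ⟨root, hroot⟩ := by
    intro k
    induction k with
    | zero =>
      intro v hv hk
      rcases h v hv with rfl | ⟨w, _, _, hlt⟩
      · exact SimpleGraph.Reachable.refl _
      · omega
    | succ k ih =>
      intro v hv hk
      rcases h v hv with rfl | ⟨w, hw, hadj, hlt⟩
      · exact SimpleGraph.Reachable.refl _
      · have h1 : (G.induce S).Adj ⟨v, hv⟩ ⟨w, hw⟩ := by simpa using hadj
        exact h1.reachable.trans (ih w hw (by omega))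
  have : Nonempty S := ⟨⟨root, hroot⟩⟩
  refine SimpleGraph.Connected.mk ?_
  rintro ⟨v, hv⟩ ⟨w, hw⟩
  exact (key _ v hv le_rfl).trans (key _ w hw le_rfl).symm

/-- The partition given by a profile. -/
def gpPart (n : ℕ) (X : ℕ → ℕ → ℕ → ℕ) : Finset (Finset (Fin n × Fin n)) :=
  Finset.univ.image (fun l : Fin n => Finset.univ.filter
    (fun v : Fin n × Fin n => gpLab n X v.1 v.2 = l))

lemma gpPart_same (n : ℕ) (X : ℕ → ℕ → ℕ → ℕ) (v w : Fin n × Fin n) :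
    (∃ s ∈ gpPart n X, v ∈ s ∧ w ∈ s) ↔ gpLab n X v.1 v.2 = gpLab n X w.1 w.2 := by
  unfold gpPart
  constructor
  · rintro ⟨s, hs, hv, hw⟩
    obtain ⟨l, _, rfl⟩ := Finset.mem_image.1 hs
    simp only [Finset.mem_filter, Finset.mem_univ, true_and] at hv hw
    rw [hv, hw]
  · intro h
    refine ⟨_, Finset.mem_image.2 ⟨⟨gpLab n X v.1 v.2, gpLab_lt n X _ _ v.1.2⟩, Finset.mem_univ _, rfl⟩, ?_, ?_⟩
    · simp
    · simp [h]

lemma gpPart_good (n : ℕ) (X : ℕ → ℕ → ℕ → ℕ) (hX : GpGood n X) (hn : 2 ≤ n) :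
    IsGridPartition n (gpPart n X) := by
  have hrI : ∀ l, l < n → gpRootI n l < n := by
    intro l hl; unfold gpRootI; split_ifs <;> omega
  have hrJ : ∀ l, l < n → gpRootJ n l < n := by
    intro l hl; unfold gpRootJ; split_ifs <;> omega
  have hne : ∀ l : Fin n, ((⟨gpRootI n l, hrI l l.2⟩, ⟨gpRootJ n l, hrJ l l.2⟩) : Fin n × Fin n) ∈
      Finset.univ.filter (fun v : Fin n × Fin n => gpLab n X v.1 v.2 = l) := by
    intro l; simp [gpRoot_lab n X hX hn]
  refine ⟨?_, ?_, ?_, ?_⟩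
  · unfold gpPart
    rw [Finset.card_image_of_injective, Finset.card_univ, Fintype.card_fin]
    intro l l' h
    have h1 := hne l
    simp only at h
    rw [h] at h1
    simp only [Finset.mem_filter, Finset.mem_univ, true_and, gpRoot_lab n X hX hn] at h1
    exact Fin.ext h1
  · intro s hs
    obtain ⟨l, _, rfl⟩ := Finset.mem_image.1 hs
    have := gp_count n X hX hn l l.2
    rw [Finset.card_filter, Fintype.sum_prod_type_right]
    rw [← Fin.sum_univ_eq_sum_range] at this
    refine Eq.trans ?_ this
    refine Finset.sum_congr rfl fun j _ => ?_
    rw [← Fin.sum_univ_eq_sum_range (fun i => if gpLab n X i j = l then 1 else 0)]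
  · intro s hs
    obtain ⟨l, _, rfl⟩ := Finset.mem_image.1 hs
    refine gp_connected _ _ _ (Finset.mem_coe.2 (hne l)) (fun v => gpMu n X v.1 v.2) ?_
    intro v hv
    simp only [Finset.coe_filter, Finset.mem_univ, true_and, Set.mem_ofPred_eq] at hv
    rcases gp_step n X hX hn v.1 v.2 v.1.2 v.2.2 with ⟨h1, h2⟩ | ⟨i', j', hi', hj', hadj, hlab, hmu⟩
    · left
      rw [hv] at h1 h2
      exact Prod.ext (Fin.ext h1) (Fin.ext h2)
    · right
      refine ⟨(⟨i', hi'⟩, ⟨j', hj'⟩), ?_, ?_, hmu⟩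
      · simp [hlab, hv]
      · rw [gridGraph_adj_iff]
        simpa [Fin.ext_iff] using hadj
  · intro v
    refine ⟨Finset.univ.filter (fun w : Fin n × Fin n => gpLab n X w.1 w.2 = gpLab n X v.1 v.2), ⟨?_, by simp⟩, ?_⟩
    · exact Finset.mem_image.2 ⟨⟨gpLab n X v.1 v.2, gpLab_lt n X _ _ v.1.2⟩, Finset.mem_univ _, rfl⟩
    · rintro s ⟨hs, hv⟩
      obtain ⟨l, _, rfl⟩ := Finset.mem_image.1 hs
      simp only [Finset.mem_filter, Finset.mem_univ, true_and] at hv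
      rw [hv]

/-- Balanced blocks of four columns. -/
abbrev GpBlock : Type := {x : Fin 4 → Fin 3 // (x 0 : ℕ) + x 1 + x 2 + x 3 = 4}

lemma card_GpBlock : Fintype.card GpBlock = 19 := by rfl

abbrev GpParam (n : ℕ) : Type := Fin (n / 4) → Fin 2 → Fin ((n - 2) / 8) → GpBlock

def gpX (n : ℕ) (p : GpParam n) (b s j : ℕ) : ℕ :=
  if h : b < n / 4 ∧ s < 2 ∧ j / 4 < (n - 2) / 8 then
    ((p ⟨b, h.1⟩ ⟨s, h.2.1⟩ ⟨j / 4, h.2.2⟩).1 ⟨j % 4, Nat.mod_lt _ (by norm_num)⟩ : ℕ)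
  else 1

lemma gpX_sum (x : ℕ → ℕ) (q : ℕ)
    (h4 : ∀ k < q, x (4 * k) + x (4 * k + 1) + x (4 * k + 2) + x (4 * k + 3) = 4)
    (h1 : ∀ j, 4 * q ≤ j → x j = 1) (m : ℕ) (hm : 4 * q ≤ m) : ∑ j ∈ Finset.range m, x j = m := by
  have h : ∀ k ≤ q, ∑ j ∈ Finset.range (4 * k), x j = 4 * k := by
    intro k
    induction k with
    | zero => simp
    | succ k ih =>
      intro hk
      have e : 4 * (k + 1) = 4 * k + 1 + 1 + 1 + 1 := by ring
      rw [e]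
      simp only [Finset.sum_range_succ]
      rw [ih (by omega)]
      have := h4 k (by omega)
      simp only [add_assoc] at this ⊢
      norm_num at this ⊢
      omega
  induction m, hm using Nat.le_induction with
  | base => exact h q le_rfl
  | succ m hm ih => rw [Finset.sum_range_succ, ih, h1 m hm]

lemma gpX_good (n : ℕ) (p : GpParam n) : GpGood n (gpX n p) := by
  have one : ∀ b s j, 4 * ((n - 2) / 8) ≤ j → gpX n p b s j = 1 := by
    intro b s j hj
    unfold gpX
    rw [dif_neg]
    omega
  refine ⟨?_, one, ?_⟩
  · intro b s j
    unfold gpX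
    split_ifs
    · omega
    · omega
  · intro b s
    refine gpX_sum _ ((n - 2) / 8) ?_ (one b s) _ (by omega)
    intro k hk
    by_cases hbs : b < n / 4 ∧ s < 2
    · have ev : ∀ r (hr : r < 4), gpX n p b s (4 * k + r) = ((p ⟨b, hbs.1⟩ ⟨s, hbs.2⟩ ⟨k, hk⟩).1 ⟨r, hr⟩ : ℕ) := by
        intro r hr
        have e1 : (4 * k + r) / 4 = k := by omega
        have e2 : (4 * k + r) % 4 = r := by omega
        unfold gpX
        rw [dif_pos ⟨hbs.1, hbs.2, by omega⟩]
        simp only [e1, e2]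
      have h0 := ev 0 (by norm_num)
      rw [add_zero] at h0
      rw [h0, ev 1 (by norm_num), ev 2 (by norm_num), ev 3 (by norm_num)]
      exact (p ⟨b, hbs.1⟩ ⟨s, hbs.2⟩ ⟨k, hk⟩).2
    · have : ∀ j, gpX n p b s j = 1 := by
        intro j; unfold gpX; rw [dif_neg]; tauto
      simp [this]

lemma gpX_eq_of_part (n : ℕ) (hn : 2 ≤ n) (X Y : ℕ → ℕ → ℕ → ℕ) (hX : GpGood n X) (hY : GpGood n Y)
    (h : gpPart n X = gpPart n Y) (b s jj : ℕ) (hb : b < n / 4) (hs : s < 2) (hj : jj < n / 2) :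
    X b s jj = Y b s jj := by
  set j := gpRefl n s jj with hjdef
  have hjn : j < n := by rw [hjdef]; unfold gpRefl; split_ifs <;> omega
  have hjj : gpRefl n s j = jj := by rw [hjdef]; unfold gpRefl; split_ifs <;> omega
  have hside : ∀ r, gpSide n r j = s := by
    intro r; rw [hjdef]; unfold gpSide gpRefl; split_ifs <;> omega
  have key : ∀ r, r < 4 → ((r ≤ X b s jj) ↔ (r ≤ Y b s jj)) := by
    intro r hr
    have hX0 := (gp_eval n X b 0 j s jj hb (by norm_num) (hside _) hjj).1
    have hY0 := (gp_eval n Y b 0 j s jj hb (by norm_num) (hside _) hjj).1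
    have hXr := (gp_eval n X b r j s jj hb hr (hside _) hjj).1
    have hYr := (gp_eval n Y b r j s jj hb hr (hside _) hjj).1
    have a := gpPart_same n X (⟨4 * b + 0, by omega⟩, ⟨j, hjn⟩) (⟨4 * b + r, by omega⟩, ⟨j, hjn⟩)
    have c := gpPart_same n Y (⟨4 * b + 0, by omega⟩, ⟨j, hjn⟩) (⟨4 * b + r, by omega⟩, ⟨j, hjn⟩)
    rw [h] at a
    have d := a.symm.trans c
    simp only [hX0, hY0, hXr, hYr] at d
    by_cases h1 : r ≤ X b s jj <;> by_cases h2 : r ≤ Y b s jj <;> simp [h1, h2] at d ⊢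
  have := hX.le_two b s jj
  have := hY.le_two b s jj
  have k1 := key 1 (by norm_num)
  have k2 := key 2 (by norm_num)
  omega

lemma gpPart_injective (n : ℕ) (hn : 2 ≤ n) (p p' : GpParam n)
    (h : gpPart n (gpX n p) = gpPart n (gpX n p')) : p = p' := by
  funext b s k
  apply Subtype.ext
  funext r
  apply Fin.ext
  have := gpX_eq_of_part n hn _ _ (gpX_good n p) (gpX_good n p') h b s (4 * k + r) b.2 s.2
    (by have := k.2; omega)
  have e1 : (4 * (k : ℕ) + r) / 4 = k := by omega
  have e2 : (4 * (k : ℕ) + r) % 4 = r := by omega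
  unfold gpX at this
  rw [dif_pos ⟨b.2, s.2, by omega⟩, dif_pos ⟨b.2, s.2, by omega⟩] at this
  simpa only [e1, e2, Fin.eta] using this

lemma gp_lower (n : ℕ) (hn : 2 ≤ n) :
    19 ^ (n / 4 * (2 * ((n - 2) / 8))) ≤ gridPartitionCount n := by
  have hc : Nat.card (GpParam n) = 19 ^ (n / 4 * (2 * ((n - 2) / 8))) := by
    rw [Nat.card_eq_fintype_card]
    simp only [Fintype.card_fun, Fintype.card_fin, card_GpBlock]
    rw [← pow_mul, ← pow_mul]
    congr 1; ring
  rw [← hc]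
  unfold gridPartitionCount
  exact Nat.card_le_card_of_injective
    (fun p : GpParam n => (⟨gpPart n (gpX n p), gpPart_good n _ (gpX_good n p) hn⟩ :
      {P : Finset (Finset (Fin n × Fin n)) // IsGridPartition n P}))
    (fun p p' h => gpPart_injective n hn p p' (congrArg Subtype.val h))

/-- Cells joined to their right (`false`) or upper (`true`) neighbour. -/
noncomputable def gpCode (n : ℕ) (P : Finset (Finset (Fin n × Fin n))) :
    Set ((Fin n × Fin n) × Bool) :=
  {c | ∃ w : Fin n × Fin n, (if c.2 then (c.1.2 = w.2 ∧ (c.1.1 : ℕ) + 1 = w.1)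
    else (c.1.1 = w.1 ∧ (c.1.2 : ℕ) + 1 = w.2)) ∧ ∃ s ∈ P, c.1 ∈ s ∧ w ∈ s}

lemma gpCode_mem (n : ℕ) (P : Finset (Finset (Fin n × Fin n))) (v w : Fin n × Fin n) :
    ((v.1 = w.1 ∧ (v.2 : ℕ) + 1 = w.2) → ((v, false) ∈ gpCode n P ↔ ∃ s ∈ P, v ∈ s ∧ w ∈ s)) ∧
    ((v.2 = w.2 ∧ (v.1 : ℕ) + 1 = w.1) → ((v, true) ∈ gpCode n P ↔ ∃ s ∈ P, v ∈ s ∧ w ∈ s)) := by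
  unfold gpCode
  simp only [Set.mem_ofPred_eq, if_true, Bool.false_eq_true, if_false]
  constructor
  · intro h
    constructor
    · rintro ⟨w', hw', hs⟩
      have : w' = w := Prod.ext (hw'.1.symm.trans h.1) (Fin.ext (by omega))
      rwa [← this]
    · intro hs; exact ⟨w, h, hs⟩
  · intro h
    constructor
    · rintro ⟨w', hw', hs⟩
      have : w' = w := Prod.ext (Fin.ext (by omega)) (hw'.1.symm.trans h.1)
      rwa [← this]
    · intro hs; exact ⟨w, h, hs⟩

lemma gpCode_sub (n : ℕ) (P Q : Finset (Finset (Fin n × Fin n))) (hP : IsGridPartition n P)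
    (hQ : IsGridPartition n Q) (h : gpCode n P = gpCode n Q) (s t : Finset (Fin n × Fin n))
    (hs : s ∈ P) (ht : t ∈ Q) (v : Fin n × Fin n) (hvs : v ∈ s) (hvt : v ∈ t) : s ⊆ t := by
  have hadj : ∀ a b, (gridGraph n).Adj a b → (∃ s ∈ P, a ∈ s ∧ b ∈ s) → ∃ s ∈ Q, a ∈ s ∧ b ∈ s := by
    intro a b hab hex
    rw [gridGraph_adj_iff] at hab
    have hex' : ∃ s ∈ P, b ∈ s ∧ a ∈ s := by
      obtain ⟨s, h1, h2, h3⟩ := hex; exact ⟨s, h1, h3, h2⟩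
    rcases hab with ⟨h1, h2 | h2⟩ | ⟨h1, h2 | h2⟩
    · rw [← (gpCode_mem n Q a b).1 ⟨h1, h2⟩, ← h, (gpCode_mem n P a b).1 ⟨h1, h2⟩]; exact hex
    · have : ∃ s ∈ Q, b ∈ s ∧ a ∈ s := by
        rw [← (gpCode_mem n Q b a).1 ⟨h1.symm, h2⟩, ← h, (gpCode_mem n P b a).1 ⟨h1.symm, h2⟩]
        exact hex'
      obtain ⟨s, h1, h2, h3⟩ := this; exact ⟨s, h1, h3, h2⟩
    · rw [← (gpCode_mem n Q a b).2 ⟨h1, h2⟩, ← h, (gpCode_mem n P a b).2 ⟨h1, h2⟩]; exact hex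
    · have : ∃ s ∈ Q, b ∈ s ∧ a ∈ s := by
        rw [← (gpCode_mem n Q b a).2 ⟨h1.symm, h2⟩, ← h, (gpCode_mem n P b a).2 ⟨h1.symm, h2⟩]
        exact hex'
      obtain ⟨s, h1, h2, h3⟩ := this; exact ⟨s, h1, h3, h2⟩
  have hstep : ∀ a b, a ∈ s → b ∈ s → (gridGraph n).Adj a b → a ∈ t → b ∈ t := by
    intro a b ha hb hab hat
    obtain ⟨t', ht', ha', hb'⟩ := hadj a b hab ⟨s, hs, ha, hb⟩
    have := (hQ.2.2.2 a).unique ⟨ht, hat⟩ ⟨ht', ha'⟩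
    rw [this]; exact hb'
  intro w hw
  have hconn := hP.2.2.1 s hs
  obtain ⟨p⟩ := hconn.preconnected ⟨v, hvs⟩ ⟨w, hw⟩
  have : ∀ (a b : (↑s : Set (Fin n × Fin n))) (_ : ((gridGraph n).induce (↑s : Set (Fin n × Fin n))).Walk a b),
      a.1 ∈ t → b.1 ∈ t := by
    intro a b p
    induction p with
    | nil => exact id
    | @cons x y z hxy _ ih =>
      intro hx
      exact ih (hstep x.1 y.1 x.2 y.2 (by simpa using hxy) hx)
  exact this _ _ p hvt

lemma gpCode_inj (n : ℕ) (P Q : Finset (Finset (Fin n × Fin n))) (hP : IsGridPartition n P)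
    (hQ : IsGridPartition n Q) (h : gpCode n P = gpCode n Q) : P ⊆ Q := by
  intro s hs
  obtain ⟨⟨v, hv⟩⟩ := (hP.2.2.1 s hs).nonempty
  obtain ⟨t, ⟨ht, hvt⟩, _⟩ := hQ.2.2.2 v
  have : s = t := Finset.Subset.antisymm
    (gpCode_sub n P Q hP hQ h s t hs ht v hv hvt)
    (gpCode_sub n Q P hQ hP h.symm t s ht hs v hvt hv)
  rwa [this]

lemma gp_upper (n : ℕ) : gridPartitionCount n ≤ 2 ^ (n * n * 2) := by
  have hc : Nat.card (Set ((Fin n × Fin n) × Bool)) = 2 ^ (n * n * 2) := by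
    rw [Nat.card_eq_fintype_card, Fintype.card_set]
    simp
  rw [← hc]
  unfold gridPartitionCount
  refine Nat.card_le_card_of_injective
    (fun P : {P : Finset (Finset (Fin n × Fin n)) // IsGridPartition n P} => gpCode n P.1) ?_
  rintro ⟨P, hP⟩ ⟨Q, hQ⟩ h
  exact Subtype.ext (Finset.Subset.antisymm (gpCode_inj n P Q hP hQ h) (gpCode_inj n Q P hQ hP h.symm))

theorem grid_partition_count_lower :
    (3 : ℝ) ^ ((1 : ℝ) / 6) ≤
      liminf (fun n : ℕ => (gridPartitionCount n : ℝ) ^ (1 / (n : ℝ) ^ 2)) atTop := by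
  refine le_liminf_of_le ?_ ?_
  · refine IsBoundedUnder.isCoboundedUnder_ge ?_
    refine isBoundedUnder_of_eventually_le (a := (4 : ℝ)) ?_
    filter_upwards [eventually_ge_atTop 1] with n hn
    have hn' : (0 : ℝ) < (n : ℝ) ^ 2 := by positivity
    have h : (gridPartitionCount n : ℝ) ≤ (4 : ℝ) ^ ((n : ℝ) ^ 2) := by
      have h1 : (gridPartitionCount n : ℝ) ≤ (2 : ℝ) ^ (n * n * 2) := by exact_mod_cast gp_upper n
      have h2 : (4 : ℝ) ^ ((n : ℝ) ^ 2) = (2 : ℝ) ^ (n * n * 2) := by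
        have : ((n : ℝ) ^ 2) = ((n ^ 2 : ℕ) : ℝ) := by push_cast; ring
        rw [this, Real.rpow_natCast]
        rw [show (4 : ℝ) = 2 ^ 2 by norm_num, ← pow_mul]
        congr 1; ring
      rw [h2]; exact h1
    calc (gridPartitionCount n : ℝ) ^ (1 / (n : ℝ) ^ 2)
        ≤ ((4 : ℝ) ^ ((n : ℝ) ^ 2)) ^ (1 / (n : ℝ) ^ 2) :=
          Real.rpow_le_rpow (by positivity) h (by positivity)
      _ = 4 := by
          rw [← Real.rpow_mul (by norm_num), mul_one_div_cancel hn'.ne', Real.rpow_one]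
  · filter_upwards [eventually_ge_atTop 3000] with n hn
    have hn' : (0 : ℝ) < (n : ℝ) ^ 2 := by positivity
    set e := n / 4 * (2 * ((n - 2) / 8)) with he
    have hlog : (209 : ℝ) * Real.log 3 ≤ 78 * Real.log 19 := by
      have : Real.log ((3 : ℝ) ^ 209) ≤ Real.log ((19 : ℝ) ^ 78) :=
        Real.log_le_log (by positivity) (by norm_num)
      rw [Real.log_pow, Real.log_pow] at this
      exact_mod_cast this
    have hl3 : 0 < Real.log 3 := Real.log_pos (by norm_num)
    have h1 : ((19 : ℝ) ^ e) ≤ (gridPartitionCount n : ℝ) := by exact_mod_cast gp_lower n (by omega)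
    have hbnd : ((n : ℝ) - 3) * ((n : ℝ) - 9) ≤ 16 * (e : ℝ) := by
      have ha : n ≤ 4 * (n / 4) + 3 := by omega
      have hb : n ≤ 8 * ((n - 2) / 8) + 9 := by omega
      have ha' : (n : ℝ) ≤ 4 * ((n / 4 : ℕ) : ℝ) + 3 := by exact_mod_cast ha
      have hb' : (n : ℝ) ≤ 8 * (((n - 2) / 8 : ℕ) : ℝ) + 9 := by exact_mod_cast hb
      have hn3 : (3000 : ℝ) ≤ n := by exact_mod_cast hn
      have : (e : ℝ) = ((n / 4 : ℕ) : ℝ) * (2 * (((n - 2) / 8 : ℕ) : ℝ)) := by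
        rw [he]; push_cast; ring
      rw [this]
      have := mul_le_mul (show (n : ℝ) - 3 ≤ 4 * ((n / 4 : ℕ) : ℝ) by linarith)
        (show (n : ℝ) - 9 ≤ 8 * (((n - 2) / 8 : ℕ) : ℝ) by linarith) (by linarith) (by positivity)
      linarith
    have hmain : (n : ℝ) ^ 2 * 1248 ≤ 1254 * (16 * (e : ℝ)) := by
      have hn3 : (3000 : ℝ) ≤ n := by exact_mod_cast hn
      nlinarith
    have h2 : (3 : ℝ) ^ ((n : ℝ) ^ 2 / 6) ≤ (19 : ℝ) ^ e := by
      rw [← Real.rpow_natCast 19 e, Real.rpow_def_of_pos (by norm_num), Real.rpow_def_of_pos (by norm_num)]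
      apply Real.exp_le_exp.2
      have he0 : (0 : ℝ) ≤ e := by positivity
      have := mul_le_mul_of_nonneg_right hlog he0
      have := mul_le_mul_of_nonneg_left hmain hl3.le
      nlinarith
    calc (3 : ℝ) ^ ((1 : ℝ) / 6) = ((3 : ℝ) ^ ((n : ℝ) ^ 2 / 6)) ^ (1 / (n : ℝ) ^ 2) := by
          rw [← Real.rpow_mul (by norm_num)]
          congr 1; field_simp
      _ ≤ (gridPartitionCount n : ℝ) ^ (1 / (n : ℝ) ^ 2) :=
          Real.rpow_le_rpow (by positivity) (h2.trans h1) (by positivity)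
end

section
/- If $n \equiv 0 \pmod 6$ and $n \ge 6$, then the number of partitions of the vertex set of the $n\times n$ grid graph into $n$ parts, each of size $n$ and each inducing a connected subgraph, is at least $3^{n(n-3)/6}$. -/
open Filter

/-- Extended digit sequence of a block: neutral value `1` at both ends. -/
def sg (k : ℕ) (s : Fin k × Fin 3 × Fin (2 * k - 1) → Fin 3) (b : Fin k) (c : Fin 3)
    (j : ℕ) : ℕ :=
  if hj : 1 ≤ j ∧ j - 1 < 2 * k - 1 then (s (b, c, ⟨j - 1, hj.2⟩) : ℕ) else 1

/-- Height of the upper part in column `j` of the block `(b, c)`. -/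
def ht (k : ℕ) (s : Fin k × Fin 3 × Fin (2 * k - 1) → Fin 3) (b : Fin k) (c : Fin 3)
    (j : ℕ) : ℕ :=
  3 + sg k s b c (j + 1) - sg k s b c j

theorem sg_le (k s b c j) : sg k s b c j ≤ 2 := by
  unfold sg
  split_ifs with h
  · have := (s (b, c, ⟨j - 1, h.2⟩)).isLt
    omega
  · omega

theorem sg_zero (k s b c) : sg k s b c 0 = 1 := by
  simp [sg]

theorem sg_last (k s b c) : sg k s b c (2 * k) = 1 := by
  unfold sg
  split_ifs with h
  · omega
  · rfl

theorem ht_add (k s b c j) : ht k s b c j + sg k s b c j = 3 + sg k s b c (j + 1) := by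
  have := sg_le k s b c j
  unfold ht
  omega

theorem ht_bounds (k s b c j) : 1 ≤ ht k s b c j ∧ ht k s b c j ≤ 5 := by
  have h1 := sg_le k s b c j
  have h2 := sg_le k s b c (j + 1)
  have := ht_add k s b c j
  omega

theorem ht_sum (k s b c m) :
    ∑ j ∈ Finset.range m, ht k s b c j + sg k s b c 0 = 3 * m + sg k s b c m := by
  induction m with
  | zero => simp
  | succ m ih =>
    rw [Finset.sum_range_succ]
    have := ht_add k s b c m
    omega

theorem ht_sum_total (k s b c) : ∑ j ∈ Finset.range (2 * k), ht k s b c j = 6 * k := by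
  have := ht_sum k s b c (2 * k)
  rw [sg_zero, sg_last] at this
  omega

theorem ht_sum_compl (k s b c) :
    ∑ j ∈ Finset.range (2 * k), (6 - ht k s b c j) = 6 * k := by
  have h1 := ht_sum_total k s b c
  have h2 : ∑ j ∈ Finset.range (2 * k), (ht k s b c j + (6 - ht k s b c j)) = 12 * k := by
    rw [Finset.sum_congr rfl (g := fun _ => 6)]
    · simp; omega
    · intro j _
      have := ht_bounds k s b c j
      omega
  rw [Finset.sum_add_distrib] at h2
  omega

theorem col_lt {k : ℕ} (c : Fin 3) {j : ℕ} (hj : j < 2 * k) : (c : ℕ) * (2 * k) + j < 6 * k := by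
  have : (c : ℕ) * (2 * k) ≤ 2 * (2 * k) := Nat.mul_le_mul_right _ (by omega)
  omega

/-- The cell in row `r` and column `j` of block `(b, c)`. -/
def cell {k : ℕ} (b : Fin k) (c : Fin 3) (r j : ℕ) (hr : r < 6) (hj : j < 2 * k) :
    Fin (6 * k) × Fin (6 * k) :=
  (⟨6 * b + r, by have := b.isLt; omega⟩, ⟨c * (2 * k) + j, col_lt c hj⟩)

/-- The label of a vertex: its block and whether it lies in the upper part. -/
def lab (k : ℕ) (s : Fin k × Fin 3 × Fin (2 * k - 1) → Fin 3) (v : Fin (6 * k) × Fin (6 * k)) :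
    Fin k × Fin 3 × Bool :=
  let b : Fin k := ⟨v.1 / 6, by have := v.1.isLt; omega⟩
  let c : Fin 3 := ⟨v.2 / (2 * k), by
    have := v.2.isLt
    rw [Nat.div_lt_iff_lt_mul (by omega)]; omega⟩
  (b, c, decide ((v.1 : ℕ) % 6 < ht k s b c ((v.2 : ℕ) % (2 * k))))

theorem lab_cell {k : ℕ} (s) (b : Fin k) (c : Fin 3) (r j : ℕ) (hr : r < 6) (hj : j < 2 * k) :
    lab k s (cell b c r j hr hj) = (b, c, decide (r < ht k s b c j)) := by
  have e1 : (6 * (b : ℕ) + r) / 6 = b := by omega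
  have e2 : (6 * (b : ℕ) + r) % 6 = r := by omega
  have e3 : ((c : ℕ) * (2 * k) + j) / (2 * k) = c := by
    rw [mul_comm, Nat.mul_add_div (by omega), Nat.div_eq_of_lt hj]; simp
  have e4 : ((c : ℕ) * (2 * k) + j) % (2 * k) = j := by
    rw [mul_comm, Nat.mul_add_mod, Nat.mod_eq_of_lt hj]
  simp [lab, cell, e1, e2, e3, e4]

theorem exists_cell {k : ℕ} (v : Fin (6 * k) × Fin (6 * k)) :
    ∃ (b : Fin k) (c : Fin 3) (r j : ℕ) (hr : r < 6) (hj : j < 2 * k), v = cell b c r j hr hj := by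
  have h1 := v.1.isLt
  have h2 := v.2.isLt
  refine ⟨⟨v.1 / 6, by omega⟩, ⟨v.2 / (2 * k), ?_⟩, v.1 % 6, v.2 % (2 * k), by omega,
    Nat.mod_lt _ (by omega), ?_⟩
  · rw [Nat.div_lt_iff_lt_mul (by omega)]; omega
  · ext
    · simp [cell]; omega
    · simp [cell, Nat.div_add_mod']

theorem cell_inj {k : ℕ} {b : Fin k} {c : Fin 3} {r j r' j' : ℕ} {hr hj hr' hj'}
    (h : cell b c r j hr hj = cell b c r' j' hr' hj') : r = r' ∧ j = j' := by
  simp [cell, Prod.ext_iff] at h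
  exact h

theorem adj_row {k : ℕ} (b : Fin k) (c : Fin 3) (r j : ℕ) (hr : r < 6) (hj : j + 1 < 2 * k) :
    (gridGraph (6 * k)).Adj (cell b c r j hr (by omega)) (cell b c r (j + 1) hr hj) := by
  unfold gridGraph
  rw [SimpleGraph.fromRel_adj]
  refine ⟨fun h => ?_, Or.inl (Or.inl ⟨rfl, ?_⟩)⟩
  · have := cell_inj h; omega
  · simp [cell]; omega

theorem adj_col {k : ℕ} (b : Fin k) (c : Fin 3) (r j : ℕ) (hr : r + 1 < 6) (hj : j < 2 * k) :
    (gridGraph (6 * k)).Adj (cell b c r j (by omega) hj) (cell b c (r + 1) j hr hj) := by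
  unfold gridGraph
  rw [SimpleGraph.fromRel_adj]
  refine ⟨fun h => ?_, Or.inl (Or.inr ⟨rfl, ?_⟩)⟩
  · have := cell_inj h; omega
  · simp [cell]; omega

/-- Fiber of the labelling. -/
def fib (k : ℕ) (s : Fin k × Fin 3 × Fin (2 * k - 1) → Fin 3) (i : Fin k × Fin 3 × Bool) :
    Finset (Fin (6 * k) × Fin (6 * k)) :=
  Finset.univ.filter (fun v => lab k s v = i)

theorem mem_fib {k s i v} : v ∈ fib k s i ↔ lab k s v = i := by simp [fib]

theorem card_fib_aux {k : ℕ} (s) (b : Fin k) (c : Fin 3) (t : Bool) (lo hi : ℕ → ℕ)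
    (hhi : ∀ j, hi j ≤ 6)
    (hm : ∀ r j, r < 6 → (decide (r < ht k s b c j) = t ↔ lo j ≤ r ∧ r < hi j)) :
    (fib k s (b, c, t)).card = ∑ j ∈ Finset.range (2 * k), (hi j - lo j) := by
  have : ∑ j ∈ Finset.range (2 * k), (hi j - lo j) =
      ((Finset.range (2 * k)).sigma (fun j => Finset.Ico (lo j) (hi j))).card := by
    rw [Finset.card_sigma]; simp
  rw [this]
  symm
  refine Finset.card_bij (fun p hp => cell b c p.2 p.1 ?_ ?_) ?_ ?_ ?_
  · simp at hp
    have := hhi p.1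
    omega
  · simp at hp
    exact hp.1
  · intro p hp
    rw [mem_fib, lab_cell]
    simp only [Finset.mem_sigma, Finset.mem_range, Finset.mem_Ico] at hp
    have := hhi p.1
    rw [(hm p.2 p.1 (by omega)).2 hp.2]
  · rintro ⟨j, r⟩ hp ⟨j', r'⟩ hp' h
    obtain ⟨h1, h2⟩ := cell_inj h
    simp only at h1 h2
    subst h1 h2
    rfl
  · intro v hv
    rw [mem_fib] at hv
    obtain ⟨b', c', r, j, hr, hj, rfl⟩ := exists_cell v
    rw [lab_cell] at hv
    simp only [Prod.mk.injEq] at hv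
    obtain ⟨rfl, rfl, hv⟩ := hv
    refine ⟨⟨j, r⟩, ?_, rfl⟩
    simp only [Finset.mem_sigma, Finset.mem_range, Finset.mem_Ico]
    exact ⟨hj, (hm r j hr).1 hv⟩

theorem card_fib (k s i) : (fib k s i).card = 6 * k := by
  obtain ⟨b, c, t⟩ := i
  cases t
  · rw [card_fib_aux s b c false (fun j => ht k s b c j) (fun _ => 6) (fun _ => le_rfl),
      ht_sum_compl]
    intro r j hr
    simp [hr]
  · rw [card_fib_aux s b c true (fun _ => 0) (fun j => ht k s b c j)]
    · simpa using ht_sum_total k s b c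
    · intro j
      have := ht_bounds k s b c j
      omega
    · intro r j hr
      simp

/-- Reachability inside a vertex set. -/
def Rch {n : ℕ} (T : Set (Fin n × Fin n)) (p q : Fin n × Fin n) : Prop :=
  ∃ (hp : p ∈ T) (hq : q ∈ T), ((gridGraph n).induce T).Reachable ⟨p, hp⟩ ⟨q, hq⟩

theorem Rch.trans {n : ℕ} {T : Set (Fin n × Fin n)} {p q r} (h : Rch T p q) (h' : Rch T q r) :
    Rch T p r := by
  obtain ⟨hp, hq, h⟩ := h
  obtain ⟨_, hr, h'⟩ := h'
  exact ⟨hp, hr, h.trans h'⟩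

theorem Rch.symm {n : ℕ} {T : Set (Fin n × Fin n)} {p q} (h : Rch T p q) : Rch T q p := by
  obtain ⟨hp, hq, h⟩ := h
  exact ⟨hq, hp, h.symm⟩

theorem Rch.refl {n : ℕ} {T : Set (Fin n × Fin n)} {p} (h : p ∈ T) : Rch T p p :=
  ⟨h, h, SimpleGraph.Reachable.refl _⟩

theorem Rch.of_adj {n : ℕ} {T : Set (Fin n × Fin n)} {p q} (hp : p ∈ T) (hq : q ∈ T)
    (h : (gridGraph n).Adj p q) : Rch T p q :=
  ⟨hp, hq, SimpleGraph.Adj.reachable (by simpa using h)⟩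

theorem rch_row {k : ℕ} (T : Set (Fin (6 * k) × Fin (6 * k))) (b : Fin k) (c : Fin 3) (r : ℕ)
    (hr : r < 6) (hk : 0 < 2 * k) (hT : ∀ j (hj : j < 2 * k), cell b c r j hr hj ∈ T) (j : ℕ)
    (hj : j < 2 * k) : Rch T (cell b c r 0 hr hk) (cell b c r j hr hj) := by
  induction j with
  | zero => exact Rch.refl (hT _ _)
  | succ j ih =>
    exact (ih (by omega)).trans (Rch.of_adj (hT _ _) (hT _ _) (adj_row b c r j hr hj))

theorem rch_col {k : ℕ} (T : Set (Fin (6 * k) × Fin (6 * k))) (b : Fin k) (c : Fin 3) (j : ℕ)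
    (hj : j < 2 * k) (r d : ℕ) (hrd : r + d < 6)
    (hT : ∀ x (hx : x < 6), r ≤ x → x ≤ r + d → cell b c x j hx hj ∈ T) :
    Rch T (cell b c r j (by omega) hj) (cell b c (r + d) j hrd hj) := by
  induction d with
  | zero => exact Rch.refl (hT _ _ le_rfl (by omega))
  | succ d ih =>
    refine (ih (by omega) (fun x hx h1 h2 => hT x hx h1 (by omega))).trans ?_
    exact Rch.of_adj (hT _ _ (by omega) (by omega)) (hT _ _ (by omega) (by omega))
      (adj_col b c (r + d) j hrd hj)

theorem conn_fib (k s i) :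
    ((gridGraph (6 * k)).induce (↑(fib k s i) : Set (Fin (6 * k) × Fin (6 * k)))).Connected := by
  obtain ⟨b, c, t⟩ := i
  have hk : 0 < 2 * k := by have := b.isLt; omega
  have key : ∃ p, p ∈ fib k s (b, c, t) ∧
      ∀ q ∈ fib k s (b, c, t), Rch (↑(fib k s (b, c, t))) p q := by
    have hm : ∀ r j (hr : r < 6) (hj : j < 2 * k),
        cell b c r j hr hj ∈ fib k s (b, c, t) ↔ decide (r < ht k s b c j) = t := by
      intro r j hr hj
      rw [mem_fib, lab_cell]; simp
    have hform : ∀ q ∈ fib k s (b, c, t), ∃ (r j : ℕ) (hr : r < 6) (hj : j < 2 * k),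
        q = cell b c r j hr hj := by
      intro q hq
      obtain ⟨b', c', r, j, hr, hj, rfl⟩ := exists_cell q
      rw [mem_fib, lab_cell] at hq
      simp only [Prod.mk.injEq] at hq
      obtain ⟨rfl, rfl, hq⟩ := hq
      exact ⟨r, j, hr, hj, rfl⟩
    cases t
    · have hb : ∀ j (hj : j < 2 * k), cell b c 5 j (by omega) hj ∈ fib k s (b, c, false) := by
        intro j hj
        have := ht_bounds k s b c j
        rw [hm]; simp; omega
      refine ⟨cell b c 5 0 (by omega) hk, hb _ _, ?_⟩
      intro q hq
      obtain ⟨r, j, hr, hj, rfl⟩ := hform q hq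
      refine (rch_row _ b c 5 (by omega) hk (fun j hj => hb j hj) j hj).trans ?_
      rw [hm] at hq
      simp only [decide_eq_false_iff_not, not_lt] at hq
      obtain ⟨d, hd⟩ : ∃ d, 5 = r + d := ⟨5 - r, by omega⟩
      have := rch_col (↑(fib k s (b, c, false))) b c j hj r d (by omega) (by
        intro x hx h1 h2
        rw [Finset.mem_coe, hm]; simp; omega)
      simp only [← hd] at this
      exact this.symm
    · have hb : ∀ j (hj : j < 2 * k), cell b c 0 j (by omega) hj ∈ fib k s (b, c, true) := by
        intro j hj
        have := ht_bounds k s b c j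
        rw [hm]; simp; omega
      refine ⟨cell b c 0 0 (by omega) hk, hb _ _, ?_⟩
      intro q hq
      obtain ⟨r, j, hr, hj, rfl⟩ := hform q hq
      refine (rch_row _ b c 0 (by omega) hk (fun j hj => hb j hj) j hj).trans ?_
      rw [hm] at hq
      simp only [decide_eq_true_eq] at hq
      have := rch_col (↑(fib k s (b, c, true))) b c j hj 0 r (by omega) (by
        intro x hx h1 h2
        rw [Finset.mem_coe, hm]; simp; omega)
      simpa only [Nat.zero_add] using this
  obtain ⟨p, hp, h⟩ := key
  rw [SimpleGraph.connected_iff_exists_forall_reachable]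
  refine ⟨⟨p, hp⟩, fun q => ?_⟩
  obtain ⟨_, _, h'⟩ := h q.1 q.2
  exact h'

/-- The partition attached to a digit assignment. -/
def part (k : ℕ) (s : Fin k × Fin 3 × Fin (2 * k - 1) → Fin 3) :
    Finset (Finset (Fin (6 * k) × Fin (6 * k))) :=
  Finset.univ.image (fib k s)

theorem fib_inj (k s) : Function.Injective (fib k s) := by
  intro i i' h
  have hk : 0 < 6 * k := by have := i.1.isLt; omega
  have hc : 0 < (fib k s i).card := by rw [card_fib]; exact hk
  obtain ⟨v, hv⟩ := Finset.card_pos.1 hc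
  have hv' := hv
  rw [h] at hv'
  rw [mem_fib] at hv hv'
  exact hv.symm.trans hv'

theorem part_isGrid (k s) : IsGridPartition (6 * k) (part k s) := by
  refine ⟨?_, ?_, ?_, ?_⟩
  · rw [part, Finset.card_image_of_injective _ (fib_inj k s)]
    simp; omega
  · intro t ht'
    simp only [part, Finset.mem_image, Finset.mem_univ, true_and] at ht'
    obtain ⟨i, rfl⟩ := ht'
    exact card_fib k s i
  · intro t ht'
    simp only [part, Finset.mem_image, Finset.mem_univ, true_and] at ht'
    obtain ⟨i, rfl⟩ := ht'
    exact conn_fib k s i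
  · intro v
    refine ⟨fib k s (lab k s v), ⟨?_, mem_fib.2 rfl⟩, ?_⟩
    · simp [part]
    · rintro t ⟨ht', hv⟩
      simp only [part, Finset.mem_image, Finset.mem_univ, true_and] at ht'
      obtain ⟨i, rfl⟩ := ht'
      rw [mem_fib] at hv
      rw [hv]

theorem part_lab {k s v w} : lab k s v = lab k s w ↔ ∃ t ∈ part k s, v ∈ t ∧ w ∈ t := by
  constructor
  · intro h
    exact ⟨fib k s (lab k s w), by simp [part], mem_fib.2 h, mem_fib.2 rfl⟩
  · rintro ⟨t, ht', hv, hw⟩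
    simp only [part, Finset.mem_image, Finset.mem_univ, true_and] at ht'
    obtain ⟨i, rfl⟩ := ht'
    rw [mem_fib] at hv hw
    rw [hv, hw]

theorem part_ht {k : ℕ} {s s'} (h : part k s = part k s') (b c j) (hj : j < 2 * k) :
    ht k s b c j = ht k s' b c j := by
  have key : ∀ r, r < 6 → (r < ht k s b c j ↔ r < ht k s' b c j) := by
    intro r hr
    have h1 : lab k s (cell b c r j hr hj) = lab k s (cell b c 0 j (by omega) hj) ↔
        lab k s' (cell b c r j hr hj) = lab k s' (cell b c 0 j (by omega) hj) := by
      rw [part_lab, part_lab, h]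
    simp only [lab_cell, Prod.mk.injEq, true_and] at h1
    have h2 : 0 < ht k s b c j := (ht_bounds k s b c j).1
    have h3 : 0 < ht k s' b c j := (ht_bounds k s' b c j).1
    simpa [h2, h3] using h1
  have h2 := ht_bounds k s b c j
  have h3 := ht_bounds k s' b c j
  have h4 := key (ht k s b c j) (by omega)
  have h5 := key (ht k s' b c j) (by omega)
  omega

theorem part_inj (k : ℕ) : Function.Injective (part k) := by
  intro s s' h
  have key : ∀ b c j, j ≤ 2 * k → sg k s b c j = sg k s' b c j := by
    intro b c j
    induction j with
    | zero => intro _; rw [sg_zero, sg_zero]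
    | succ j ih =>
      intro hj
      have h1 := ih (by omega)
      have h2 := part_ht h b c j (by omega)
      have h3 := ht_add k s b c j
      have h4 := ht_add k s' b c j
      omega
  funext ⟨b, c, j⟩
  have hj := j.isLt
  have := key b c (j + 1) (by omega)
  simp [sg] at this
  exact Fin.ext this

theorem grid_partition_count_lower_explicit (n : ℕ) (h6 : n % 6 = 0) (hn : 6 ≤ n) :
    3 ^ (n * (n - 3) / 6) ≤ gridPartitionCount n := by
  obtain ⟨k, rfl⟩ : ∃ k, n = 6 * k := ⟨n / 6, by omega⟩
  have hexp : 6 * k * (6 * k - 3) / 6 = k * (3 * (2 * k - 1)) := by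
    rw [mul_assoc, Nat.mul_div_cancel_left _ (by norm_num)]
    congr 1
    omega
  have hcard : Nat.card (Fin k × Fin 3 × Fin (2 * k - 1) → Fin 3) = 3 ^ (k * (3 * (2 * k - 1))) := by
    simp
  rw [hexp, ← hcard]
  unfold gridPartitionCount
  refine Nat.card_le_card_of_injective
    (fun s => (⟨part k s, part_isGrid k s⟩ :
      {P : Finset (Finset (Fin (6 * k) × Fin (6 * k))) // IsGridPartition (6 * k) P})) ?_
  intro s s' h
  exact part_inj k (Subtype.ext_iff.1 h)
end

section
/- Let $G$ be a finite connected simple graph and let $k \ge 1$. Every partition of the vertex set of $G$ into $k$ nonempty parts, each inducing a connected subgraph, can be obtained from some spanning tree of $G$ by deleting $k-1$ of its edges and taking the vertex sets of the resulting $k$ components. Consequently, the number of such partitions is at most $\tau(G)\binom{|E(G)|}{k-1}$, where $\tau(G)$ is the number of spanning trees of $G$. -/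
/-- `P` is a partition of the vertex set of `G` into nonempty parts, each of which
induces a connected subgraph of `G`. -/
def IsConnPartition {V : Type*} (G : SimpleGraph V) (P : Finset (Finset V)) : Prop :=
  (∀ s ∈ P, (↑s : Set V).Nonempty ∧ (G.induce (↑s : Set V)).Connected) ∧
  (∀ v : V, ∃! s, s ∈ P ∧ v ∈ s)

open Classical in
theorem forest_card {V : Type*} [Fintype V] (H : SimpleGraph V) (hH : H.IsAcyclic) :
    H.edgeFinset.card + Fintype.card H.ConnectedComponent = Fintype.card V := by
  have h1 := H.sum_degrees_eq_twice_card_edges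
  have h2 : ∀ c : H.ConnectedComponent,
      (∑ v : c.supp, H.degree v.1) + 2 = 2 * Fintype.card c.supp := by
    intro c
    have ht : (H.induce c.supp).IsTree := hH.isTree_connectedComponent c
    have e1 := ht.card_edgeFinset
    have e2 := (H.induce c.supp).sum_degrees_eq_twice_card_edges
    have e3 : ∀ v : c.supp, (H.induce c.supp).degree v = H.degree v.1 := by
      intro v
      convert SimpleGraph.degree_induce_of_neighborSet_subset (G := H) (s := c.supp) (v := v) ?_
      intro w hw
      have hv := v.2
      rw [SimpleGraph.ConnectedComponent.mem_supp_iff] at hv ⊢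
      rw [← hv]
      exact SimpleGraph.ConnectedComponent.sound (SimpleGraph.Adj.reachable hw).symm
    simp only [e3] at e2
    have e4 : Fintype.card ↥c.supp = Fintype.card c.supp := rfl
    omega
  have h3 : ∀ f : V → ℕ, ∑ v, f v = ∑ c : H.ConnectedComponent, ∑ v : c.supp, f v.1 := by
    intro f
    rw [← Finset.sum_fiberwise Finset.univ H.connectedComponentMk f]
    refine Finset.sum_congr rfl fun c _ => ?_
    refine (Finset.sum_subtype _ (fun x => ?_) f)
    simp
  have h4 := h3 (fun _ => 1)
  rw [h3] at h1
  have h5 : ∑ c : H.ConnectedComponent, ((∑ v : c.supp, H.degree v.1) + 2)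
      = ∑ c : H.ConnectedComponent, 2 * Fintype.card c.supp :=
    Finset.sum_congr rfl fun c _ => h2 c
  rw [Finset.sum_add_distrib, ← Finset.mul_sum, h1] at h5
  simp only [Finset.sum_const, Finset.card_univ, smul_eq_mul, mul_one] at h4 h5
  omega

theorem part_one {V : Type*} [Fintype V] (G : SimpleGraph V)
    (hG : G.Connected) (k : ℕ) (P : Finset (Finset V)) (hP : IsConnPartition G P)
    (hk : P.card = k) :
      ∃ T : SimpleGraph V, T ≤ G ∧ T.IsTree ∧
        ∃ F : Set (Sym2 V), F ⊆ T.edgeSet ∧ F.ncard = k - 1 ∧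
          ∀ s : Finset V,
            s ∈ P ↔ ∃ c : (T.deleteEdges F).ConnectedComponent, (↑s : Set V) = c.supp := by
  classical
  obtain ⟨hP1, hP2⟩ := hP
  let G' : SimpleGraph V :=
    { Adj := fun u v => G.Adj u v ∧ ∃ s ∈ P, u ∈ s ∧ v ∈ s
      symm := ⟨fun u v ⟨h, s, hs, a, b⟩ => ⟨h.symm, s, hs, b, a⟩⟩
      loopless := ⟨fun u h => G.loopless.irrefl u h.1⟩ }
  have hG' : G' ≤ G := fun u v h => h.1
  have hreach : ∀ u v, G'.Reachable u v ↔ ∃ s ∈ P, u ∈ s ∧ v ∈ s := by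
    intro u v
    constructor
    · rintro ⟨p⟩
      induction p with
      | nil =>
        rename_i u
        obtain ⟨s, ⟨hs, hu⟩, -⟩ := hP2 u
        exact ⟨s, hs, hu, hu⟩
      | cons h p ih =>
        obtain ⟨-, s, hs, a, b⟩ := h
        obtain ⟨t, ht, c, d⟩ := ih
        have := (hP2 _).unique ⟨hs, b⟩ ⟨ht, c⟩
        subst this
        exact ⟨s, hs, a, d⟩
    · rintro ⟨s, hs, hu, hv⟩
      have hc := (hP1 s hs).2.preconnected ⟨u, hu⟩ ⟨v, hv⟩
      let f : G.induce (↑s : Set V) →g G' :=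
        { toFun := fun x => x.1
          map_rel' := fun {a b} h => ⟨h, s, hs, a.2, b.2⟩ }
      exact hc.map f
  obtain ⟨H, hHG', hHa, hHr⟩ := G'.exists_isAcyclic_reachable_eq_le
  obtain ⟨T, hHT, hTG, hT⟩ := hG.exists_isTree_le_of_le_of_isAcyclic (hHG'.trans hG') hHa
  have hcomp : ∀ s : Finset V, s ∈ P ↔ ∃ c : H.ConnectedComponent, (↑s : Set V) = c.supp := by
    have key : ∀ s ∈ P, ∀ u ∈ s, (↑s : Set V) = (H.connectedComponentMk u).supp := by
      intro s hs u hu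
      ext v
      rw [SimpleGraph.ConnectedComponent.mem_supp_iff, SimpleGraph.ConnectedComponent.eq, hHr,
        hreach]
      constructor
      · intro hv
        exact ⟨s, hs, hv, hu⟩
      · rintro ⟨t, ht, hv, hu'⟩
        rwa [(hP2 u).unique ⟨hs, hu⟩ ⟨ht, hu'⟩]
    intro s
    constructor
    · intro hs
      obtain ⟨u, hu⟩ := (hP1 s hs).1
      exact ⟨_, key s hs u hu⟩
    · rintro ⟨c, hc⟩
      induction c using SimpleGraph.ConnectedComponent.ind with
      | h u =>
        obtain ⟨t, ⟨ht, hu⟩, -⟩ := hP2 u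
        have := hc.trans (key t ht u hu).symm
        rwa [Finset.coe_inj.1 this]
  have hcard : Fintype.card H.ConnectedComponent = k := by
    rw [← hk, ← Finset.card_univ,
      ← Finset.card_image_of_injective (Finset.univ : Finset H.ConnectedComponent)
        (f := fun c => c.supp.toFinset)]
    · congr 1
      ext s
      rw [hcomp]
      simp only [Finset.mem_image, Finset.mem_univ, true_and]
      refine exists_congr fun c => ?_
      rw [← Finset.coe_inj, Set.coe_toFinset, eq_comm]
    · intro c d h
      exact SimpleGraph.ConnectedComponent.supp_injective (Set.toFinset_inj.1 h)
  refine ⟨T, hTG, hT, T.edgeSet \ H.edgeSet, Set.diff_subset, ?_, ?_⟩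
  · have e1 := forest_card H hHa
    have e2 := hT.card_edgeFinset
    have e3 := Set.ncard_sdiff (SimpleGraph.edgeSet_mono hHT) (Set.toFinite _)
    rw [e3]
    rw [← SimpleGraph.coe_edgeFinset, ← SimpleGraph.coe_edgeFinset, Set.ncard_coe_finset,
      Set.ncard_coe_finset]
    omega
  · rw [T.deleteEdges_sdiff_eq_of_le hHT]
    exact hcomp

theorem partition_from_spanning_tree {V : Type*} [Fintype V] (G : SimpleGraph V)
    (hG : G.Connected) (k : ℕ) (hk : 1 ≤ k) :
    (∀ P : Finset (Finset V), IsConnPartition G P → P.card = k →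
      ∃ T : SimpleGraph V, T ≤ G ∧ T.IsTree ∧
        ∃ F : Set (Sym2 V), F ⊆ T.edgeSet ∧ F.ncard = k - 1 ∧
          ∀ s : Finset V,
            s ∈ P ↔ ∃ c : (T.deleteEdges F).ConnectedComponent, (↑s : Set V) = c.supp) ∧
    Nat.card {P : Finset (Finset V) // IsConnPartition G P ∧ P.card = k} ≤
      Nat.card {T : SimpleGraph V // T ≤ G ∧ T.IsTree} * (G.edgeSet.ncard).choose (k - 1) := by
  classical
  refine ⟨fun P hP hk => part_one G hG k P hP hk, ?_⟩
  have hc : (G.edgeSet.ncard).choose (k - 1)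
      = Nat.card (Finset.powersetCard (k - 1) G.edgeFinset) := by
    rw [Nat.card_eq_fintype_card, Fintype.card_coe, Finset.card_powersetCard,
      ← SimpleGraph.coe_edgeFinset, Set.ncard_coe_finset]
  rw [hc, ← Nat.card_prod]
  choose T hT1 hT2 F hF1 hF2 hF3 using
    fun P : {P : Finset (Finset V) // IsConnPartition G P ∧ P.card = k} =>
      part_one G hG k P.1 P.2.1 P.2.2
  refine Nat.card_le_card_of_injective
    (fun P => (⟨T P, hT1 P, hT2 P⟩, ⟨(F P).toFinset, ?_⟩)) ?_
  · rw [Finset.mem_powersetCard]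
    refine ⟨?_, ?_⟩
    · intro e he
      rw [SimpleGraph.mem_edgeFinset]
      exact SimpleGraph.edgeSet_mono (hT1 P) (hF1 P (Set.mem_toFinset.1 he))
    · rw [← Set.ncard_eq_toFinset_card', hF2]
  · intro P Q h
    simp only [Prod.mk.injEq, Subtype.mk.injEq, Set.toFinset_inj] at h
    apply Subtype.ext
    ext s
    rw [hF3, hF3, h.1, h.2]
end

section
/- Let $P_n$ denote the number of partitions of the vertex set of the $n\times n$ grid graph into $n$ parts, each of size $n$ and each inducing a connected subgraph, and let $\tau(G_n)$ denote the number of spanning trees of the $n\times n$ grid graph. Then for all $n \ge 1$, $P_n \le \tau(G_n)\binom{2n(n-1)}{n-1}$. -/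
open Filter

/-- The number of spanning trees of the n × n grid graph. -/
noncomputable def gridSpanningTreeCount (n : ℕ) : ℕ :=
  Nat.card {T : SimpleGraph (Fin n × Fin n) // T ≤ gridGraph n ∧ T.IsTree}

open Classical in
lemma grid_card_edges_le (n : ℕ) : (gridGraph n).edgeFinset.card ≤ 2 * n * (n - 1) := by
  let f : Bool × Fin n × Fin (n - 1) → Sym2 (Fin n × Fin n) := fun x =>
    if x.1 then s((x.2.1, ⟨x.2.2, by omega⟩), (x.2.1, ⟨x.2.2 + 1, by omega⟩))
    else s((⟨x.2.2, by omega⟩, x.2.1), (⟨x.2.2 + 1, by omega⟩, x.2.1))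
  have key : ∀ a b : Fin n × Fin n,
      ((a.1 = b.1 ∧ (a.2 : ℕ) + 1 = (b.2 : ℕ)) ∨ (a.2 = b.2 ∧ (a.1 : ℕ) + 1 = (b.1 : ℕ))) →
      ∃ x, f x = s(a, b) := by
    rintro ⟨a1, a2⟩ ⟨b1, b2⟩ (⟨h1, h2⟩ | ⟨h1, h2⟩)
    · refine ⟨(true, a1, ⟨a2, by simp at h2; omega⟩), ?_⟩
      simp only at h1 h2
      subst h1
      simp [f, h2]
    · refine ⟨(false, a2, ⟨a1, by simp at h2; omega⟩), ?_⟩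
      simp only at h1 h2
      subst h1
      simp [f, h2]
  have hsub : (gridGraph n).edgeFinset ⊆ Finset.univ.image f := by
    intro e he
    rw [SimpleGraph.mem_edgeFinset] at he
    induction e with
    | _ a b =>
      rw [SimpleGraph.mem_edgeSet, gridGraph, SimpleGraph.fromRel_adj] at he
      rw [Finset.mem_image]
      rcases he.2 with h | h
      · obtain ⟨x, hx⟩ := key a b h
        exact ⟨x, Finset.mem_univ _, hx⟩
      · obtain ⟨x, hx⟩ := key b a h
        exact ⟨x, Finset.mem_univ _, by rw [hx, Sym2.eq_swap]⟩
  calc _ ≤ (Finset.univ.image f).card := Finset.card_le_card hsub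
    _ ≤ _ := Finset.card_image_le
    _ = _ := by simp [mul_assoc]

lemma grid_connected (n : ℕ) (hn : 1 ≤ n) : (gridGraph n).Connected := by
  obtain ⟨m, rfl⟩ : ∃ m, n = m + 1 := ⟨n - 1, by omega⟩
  have h := (SimpleGraph.pathGraph_connected m).boxProd (SimpleGraph.pathGraph_connected m)
  refine h.mono ?_
  rintro ⟨a1, a2⟩ ⟨b1, b2⟩ hab
  have hne := hab.ne
  rw [SimpleGraph.boxProd_adj, SimpleGraph.pathGraph_adj, SimpleGraph.pathGraph_adj] at hab
  rw [gridGraph, SimpleGraph.fromRel_adj]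
  refine ⟨hne, ?_⟩
  simp only at hab ⊢
  rcases hab with ⟨h | h, rfl⟩ | ⟨h | h, rfl⟩ <;> simp [h]

/-- The relation of lying in a common part. -/
def SamePart {V : Type*} (P : Finset (Finset V)) (u v : V) : Prop :=
  ∃ s ∈ P, u ∈ s ∧ v ∈ s

lemma part_unique {n : ℕ} {P : Finset (Finset (Fin n × Fin n))} (hP : IsGridPartition n P)
    {s t : Finset (Fin n × Fin n)} (hs : s ∈ P) (ht : t ∈ P) {v : Fin n × Fin n}
    (h1 : v ∈ s) (h2 : v ∈ t) : s = t :=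
  (hP.2.2.2 v).unique ⟨hs, h1⟩ ⟨ht, h2⟩

/-- Grid edges inside parts. -/
def innerGraph (n : ℕ) (P : Finset (Finset (Fin n × Fin n))) : SimpleGraph (Fin n × Fin n) where
  Adj u v := (gridGraph n).Adj u v ∧ SamePart P u v
  symm := ⟨fun _ _ h => ⟨h.1.symm, by
    obtain ⟨s, hs, h1, h2⟩ := h.2
    exact ⟨s, hs, h2, h1⟩⟩⟩
  loopless := ⟨fun _ h => h.1.ne rfl⟩

lemma inner_reachable {n : ℕ} {P : Finset (Finset (Fin n × Fin n))} (hP : IsGridPartition n P)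
    (u v : Fin n × Fin n) : (innerGraph n P).Reachable u v ↔ SamePart P u v := by
  constructor
  · rintro ⟨p⟩
    induction p with
    | nil =>
      obtain ⟨s, hs, _⟩ := hP.2.2.2 ‹_›
      exact ⟨s, hs.1, hs.2, hs.2⟩
    | cons h p ih =>
      obtain ⟨s, hs, h1, h2⟩ := h.2
      obtain ⟨t, ht, h3, h4⟩ := ih
      obtain rfl := part_unique hP hs ht h2 h3
      exact ⟨s, hs, h1, h4⟩
  · rintro ⟨s, hs, hu, hv⟩
    have h := (hP.2.2.1 s hs).preconnected ⟨u, hu⟩ ⟨v, hv⟩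
    let f : (gridGraph n).induce (↑s : Set (Fin n × Fin n)) →g innerGraph n P :=
      ⟨fun x => x.1, fun {a b} hab => ⟨hab, s, hs, a.2, b.2⟩⟩
    exact h.map f

open Classical in
lemma forest_card_s6 {n : ℕ} {P : Finset (Finset (Fin n × Fin n))}
    (hP : IsGridPartition n P) (F : SimpleGraph (Fin n × Fin n)) (hF : F.IsAcyclic)
    (hR : ∀ u v, F.Reachable u v ↔ SamePart P u v) :
    F.edgeFinset.card = n * (n - 1) := by
  have hsub : F.edgeFinset = P.biUnion (fun s =>
      ((F.induce (↑s : Set (Fin n × Fin n))).edgeFinset).image (Sym2.map Subtype.val)) := by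
    ext e
    simp only [Finset.mem_biUnion, Finset.mem_image, SimpleGraph.mem_edgeFinset]
    constructor
    · intro he
      induction e with
      | _ a b =>
        rw [SimpleGraph.mem_edgeSet] at he
        obtain ⟨s, hs, h1, h2⟩ := (hR a b).1 he.reachable
        exact ⟨s, hs, s(⟨a, h1⟩, ⟨b, h2⟩), he, rfl⟩
    · rintro ⟨s, hs, e', he', rfl⟩
      induction e' with
      | _ a b => exact he'
  rw [hsub, Finset.card_biUnion]
  · have hc : ∀ s ∈ P, (((F.induce (↑s : Set (Fin n × Fin n))).edgeFinset).image
        (Sym2.map Subtype.val)).card = n - 1 := by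
      intro s hs
      rw [Finset.card_image_of_injective _ (Sym2.map.injective Subtype.val_injective)]
      have hT : (F.induce (↑s : Set (Fin n × Fin n))).IsTree := by
        refine ⟨?_, hF.induce _⟩
        have := (hP.2.2.1 s hs).nonempty
        refine ⟨?_⟩
        rintro ⟨u, hu⟩ ⟨v, hv⟩
        obtain ⟨p⟩ := (hR u v).2 ⟨s, hs, hu, hv⟩
        have hp : ∀ x ∈ p.support, x ∈ (↑s : Set (Fin n × Fin n)) := by
          intro x hx
          obtain ⟨t, ht, h1, h2⟩ := (hR u x).1 ⟨p.takeUntil x hx⟩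
          obtain rfl := part_unique hP hs ht hu h1
          exact h2
        exact ⟨p.induce _ hp⟩
      have h := hT.card_edgeFinset
      have h2 : Fintype.card (↑s : Set (Fin n × Fin n)) = n := by
        refine Eq.trans ?_ (hP.2.1 s hs)
        simp
      omega
    rw [Finset.sum_congr rfl hc]
    simp [hP.1]
  · intro s hs t ht hst
    rw [Function.onFun, Finset.disjoint_left]
    intro e he he2
    rw [Finset.mem_image] at he he2
    obtain ⟨e1, _, rfl⟩ := he
    obtain ⟨e2, _, h⟩ := he2
    induction e1 with
    | _ a b =>
    have ha : a.1 ∈ Sym2.map Subtype.val e2 := by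
      rw [h]; simp
    rw [Sym2.mem_map] at ha
    obtain ⟨c, _, hc⟩ := ha
    exact hst (part_unique hP hs ht a.2 (by rw [← hc]; exact c.2))

open Classical in
lemma exists_tree_forest {n : ℕ} (hn : 1 ≤ n) {P : Finset (Finset (Fin n × Fin n))}
    (hP : IsGridPartition n P) : ∃ T F : SimpleGraph (Fin n × Fin n),
      F ≤ T ∧ (T ≤ gridGraph n ∧ T.IsTree) ∧ (∀ u v, F.Reachable u v ↔ SamePart P u v) ∧
      (T.edgeFinset \ F.edgeFinset).card = n - 1 := by
  obtain ⟨F, hFH, hF, hR⟩ := (innerGraph n P).exists_isAcyclic_reachable_eq_le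
  have hR' : ∀ u v, F.Reachable u v ↔ SamePart P u v := by
    intro u v
    rw [hR, inner_reachable hP]
  have hle : F ≤ gridGraph n := fun a b h => (hFH h).1
  obtain ⟨T, hFT, hTG, hT⟩ := (grid_connected n hn).exists_isTree_le_of_le_of_isAcyclic hle hF
  refine ⟨T, F, hFT, ⟨hTG, hT⟩, hR', ?_⟩
  rw [Finset.card_sdiff_of_subset (by simpa using hFT), forest_card_s6 hP F hF hR']
  have h := hT.card_edgeFinset
  simp only [Fintype.card_prod, Fintype.card_fin] at h
  obtain ⟨m, rfl⟩ : ∃ m, n = m + 1 := ⟨n - 1, by omega⟩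
  simp only [Nat.add_sub_cancel]
  have h3 : (m + 1) * (m + 1) = (m + 1) * m + m + 1 := by ring
  omega

lemma partition_subset {n : ℕ} (hn : 1 ≤ n) {P Q : Finset (Finset (Fin n × Fin n))}
    (hP : IsGridPartition n P) (hQ : IsGridPartition n Q)
    (h : ∀ u v, SamePart P u v ↔ SamePart Q u v) : P ⊆ Q := by
  have hcl : ∀ {P : Finset (Finset (Fin n × Fin n))}, IsGridPartition n P → ∀ s ∈ P, ∀ u ∈ s,
      ∀ v, v ∈ s ↔ SamePart P u v := by
    intro P hP s hs u hu v
    refine ⟨fun hv => ⟨s, hs, hu, hv⟩, ?_⟩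
    rintro ⟨t, ht, h1, h2⟩
    rw [part_unique hP hs ht hu h1]
    exact h2
  intro s hs
  have hne : s.Nonempty := by
    rw [← Finset.card_pos, hP.2.1 s hs]; omega
  obtain ⟨u, hu⟩ := hne
  obtain ⟨t, ⟨ht, hut⟩, _⟩ := hQ.2.2.2 u
  have : s = t := by
    ext v
    rw [hcl hP s hs u hu v, hcl hQ t ht u hut v, h]
  rw [this]; exact ht

theorem grid_partition_count_le_tree_bound (n : ℕ) (hn : 1 ≤ n) :
    gridPartitionCount n ≤ gridSpanningTreeCount n * (2 * n * (n - 1)).choose (n - 1) := by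
  classical
  choose T F hFT hT hR hcard using
    fun P : {P : Finset (Finset (Fin n × Fin n)) // IsGridPartition n P} =>
      exists_tree_forest hn P.2
  let S := (gridGraph n).edgeFinset.powersetCard (n - 1)
  let f : {P : Finset (Finset (Fin n × Fin n)) // IsGridPartition n P} →
      {T : SimpleGraph (Fin n × Fin n) // T ≤ gridGraph n ∧ T.IsTree} × S := fun P =>
    (⟨T P, hT P⟩, ⟨(T P).edgeFinset \ (F P).edgeFinset, by
      rw [Finset.mem_powersetCard]
      refine ⟨Finset.sdiff_subset.trans ?_, by convert hcard P⟩
      simpa using (hT P).1⟩)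
  have hf : Function.Injective f := by
    intro P Q hPQ
    have h1 : T P = T Q := congrArg (fun x => x.1.1) hPQ
    have h2 : (T P).edgeFinset \ (F P).edgeFinset = (T Q).edgeFinset \ (F Q).edgeFinset :=
      congrArg (fun x => x.2.1) hPQ
    have hadj : ∀ P e, e ∈ (F P).edgeSet ↔
        e ∈ (T P).edgeSet ∧ e ∉ (T P).edgeFinset \ (F P).edgeFinset := by
      intro P e
      have : e ∈ (F P).edgeSet → e ∈ (T P).edgeSet := fun he => SimpleGraph.edgeSet_mono (hFT P) he
      simp only [Finset.mem_sdiff, SimpleGraph.mem_edgeFinset]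
      tauto
    have h3 : F P = F Q := by
      apply SimpleGraph.edgeSet_injective
      ext e
      rw [hadj P, hadj Q, h2, h1]
    have h4 : ∀ u v, SamePart P.1 u v ↔ SamePart Q.1 u v := by
      intro u v
      rw [← hR P, ← hR Q, h3]
    exact Subtype.ext (Finset.Subset.antisymm (partition_subset hn P.2 Q.2 h4)
      (partition_subset hn Q.2 P.2 fun u v => (h4 u v).symm))
  have h := Nat.card_le_card_of_injective f hf
  rw [Nat.card_prod] at h
  refine h.trans (Nat.mul_le_mul_left _ ?_)
  rw [Nat.card_eq_fintype_card, Fintype.card_coe, Finset.card_powersetCard]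
  exact Nat.choose_le_choose _ (by convert grid_card_edges_le n)
end

section
/- For $n \ge 1$, the partition of the $n\times n$ grid graph into the $n$ vertical columns (the parts $\{i\}\times\{0,\dots,n-1\}$ for $i = 0,\dots,n-1$) is a partition into $n$ parts, each of size $n$ and each inducing a connected subgraph, and its cut score equals $n(n-1)$. Consequently, the maximum cut score over all partitions of the $n\times n$ grid graph into $n$ connected parts of size $n$ equals $n(n-1)$. -/
open Filter

lemma gridGraph_adj (n : ℕ) (a b : Fin n × Fin n) : (gridGraph n).Adj a b ↔
    ((a.1 = b.1 ∧ (a.2 : ℕ) + 1 = (b.2 : ℕ)) ∨ (a.2 = b.2 ∧ (a.1 : ℕ) + 1 = (b.1 : ℕ))) ∨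
    ((b.1 = a.1 ∧ (b.2 : ℕ) + 1 = (a.2 : ℕ)) ∨ (b.2 = a.2 ∧ (b.1 : ℕ) + 1 = (a.1 : ℕ))) := by
  unfold gridGraph
  rw [SimpleGraph.fromRel_adj]
  constructor
  · exact fun h => h.2
  · intro h
    refine ⟨?_, h⟩
    rintro rfl
    omega

/-- vertical edges -/
def vEdge (m : ℕ) (p : Fin (m + 1) × Fin m) : Sym2 (Fin (m + 1) × Fin (m + 1)) :=
  s((p.1, p.2.castSucc), (p.1, p.2.succ))

/-- horizontal edges -/
def hEdge (m : ℕ) (p : Fin (m + 1) × Fin m) : Sym2 (Fin (m + 1) × Fin (m + 1)) :=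
  s((p.2.castSucc, p.1), (p.2.succ, p.1))

lemma vEdge_inj (m : ℕ) : Function.Injective (vEdge m) := by
  rintro ⟨a, b⟩ ⟨c, d⟩ h
  simp only [vEdge, Sym2.eq_iff, Prod.mk.injEq, Fin.ext_iff, Fin.val_castSucc,
    Fin.val_succ] at h ⊢
  omega

lemma hEdge_inj (m : ℕ) : Function.Injective (hEdge m) := by
  rintro ⟨a, b⟩ ⟨c, d⟩ h
  simp only [hEdge, Sym2.eq_iff, Prod.mk.injEq, Fin.ext_iff, Fin.val_castSucc,
    Fin.val_succ] at h ⊢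
  omega

lemma ncard_v (m : ℕ) : (Set.range (vEdge m)).ncard = (m + 1) * m := by
  rw [← Set.image_univ, Set.ncard_image_of_injective _ (vEdge_inj m), Set.ncard_univ]
  simp

lemma ncard_h (m : ℕ) : (Set.range (hEdge m)).ncard = (m + 1) * m := by
  rw [← Set.image_univ, Set.ncard_image_of_injective _ (hEdge_inj m), Set.ncard_univ]
  simp

lemma vAux (m : ℕ) (a b : Fin (m + 1) × Fin (m + 1))
    (h : a.1 = b.1 ∧ (a.2 : ℕ) + 1 = (b.2 : ℕ)) : ∃ p, vEdge m p = s(a, b) := by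
  obtain ⟨a1, a2⟩ := a
  obtain ⟨b1, b2⟩ := b
  obtain ⟨h1, h2⟩ := h
  simp only at h1 h2
  refine ⟨(a1, ⟨a2, by omega⟩), ?_⟩
  subst h1
  simp only [vEdge, Sym2.eq_iff, Prod.mk.injEq, Fin.ext_iff, Fin.val_castSucc,
    Fin.val_succ]
  exact Or.inl (by simp [h2])

lemma hAux (m : ℕ) (a b : Fin (m + 1) × Fin (m + 1))
    (h : a.2 = b.2 ∧ (a.1 : ℕ) + 1 = (b.1 : ℕ)) : ∃ p, hEdge m p = s(a, b) := by
  obtain ⟨a1, a2⟩ := a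
  obtain ⟨b1, b2⟩ := b
  obtain ⟨h1, h2⟩ := h
  simp only at h1 h2
  refine ⟨(a2, ⟨a1, by omega⟩), ?_⟩
  subst h1
  simp only [hEdge, Sym2.eq_iff, Prod.mk.injEq, Fin.ext_iff, Fin.val_castSucc,
    Fin.val_succ]
  exact Or.inl (by simp [h2])

lemma edgeSet_eq (m : ℕ) :
    (gridGraph (m + 1)).edgeSet = Set.range (vEdge m) ∪ Set.range (hEdge m) := by
  ext e
  constructor
  · induction e with
    | _ a b =>
      intro h
      rw [SimpleGraph.mem_edgeSet, gridGraph_adj] at h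
      rcases h with (h | h) | (h | h)
      · exact Or.inl (vAux m a b h)
      · exact Or.inr (hAux m a b h)
      · rw [Sym2.eq_swap]; exact Or.inl (vAux m b a h)
      · rw [Sym2.eq_swap]; exact Or.inr (hAux m b a h)
  · rintro (⟨p, rfl⟩ | ⟨p, rfl⟩)
    · simp [vEdge, gridGraph_adj]
    · simp [hEdge, gridGraph_adj]

lemma ncard_edgeSet_le (m : ℕ) :
    (gridGraph (m + 1)).edgeSet.ncard ≤ (m + 1) * m + (m + 1) * m := by
  rw [edgeSet_eq]
  refine (Set.ncard_union_le _ _).trans ?_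
  rw [ncard_v, ncard_h]

/-- the columns partition -/
abbrev colP (n : ℕ) : Finset (Finset (Fin n × Fin n)) :=
  Finset.image
        (fun i : Fin n => Finset.univ.filter (fun v : Fin n × Fin n => v.1 = i))
        Finset.univ

lemma col_conn (m : ℕ) (i : Fin (m + 1)) :
    ((gridGraph (m + 1)).induce
      (↑(Finset.univ.filter (fun v : Fin (m + 1) × Fin (m + 1) => v.1 = i)) :
        Set (Fin (m + 1) × Fin (m + 1)))).Connected := by
  rw [SimpleGraph.connected_iff_exists_forall_reachable]
  refine ⟨⟨(i, 0), by simp⟩, ?_⟩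
  rintro ⟨⟨a, j⟩, h⟩
  have ha : a = i := by simpa using h
  subst ha
  induction j using Fin.induction with
  | zero => exact SimpleGraph.Reachable.refl _
  | succ j ih =>
    refine (ih (by simp)).trans (SimpleGraph.Adj.reachable ?_)
    simp [gridGraph_adj]

lemma col_part (m : ℕ) : IsGridPartition (m + 1) (colP (m + 1)) := by
  refine ⟨?_, ?_, ?_, ?_⟩
  · rw [Finset.card_image_of_injective]
    · simp
    · intro i j h
      have : ((i, 0) : Fin (m + 1) × Fin (m + 1)) ∈
          Finset.univ.filter (fun v : Fin (m + 1) × Fin (m + 1) => v.1 = i) := by simp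
      simp only at h
      rw [h] at this
      simpa using this
  · intro s hs
    simp only [colP, Finset.mem_image, Finset.mem_univ, true_and] at hs
    obtain ⟨i, rfl⟩ := hs
    have : (Finset.univ.filter (fun v : Fin (m + 1) × Fin (m + 1) => v.1 = i)) =
        {i} ×ˢ Finset.univ := by
      ext ⟨v, w⟩
      simp only [Finset.mem_filter, Finset.mem_univ, true_and, Finset.mem_product,
        Finset.mem_singleton, and_true]
    rw [this, Finset.card_product]; simp
  · intro s hs
    simp only [colP, Finset.mem_image, Finset.mem_univ, true_and] at hs
    obtain ⟨i, rfl⟩ := hs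
    exact col_conn m i
  · intro v
    refine ⟨Finset.univ.filter (fun w : Fin (m + 1) × Fin (m + 1) => w.1 = v.1), ?_, ?_⟩
    · simp [colP]
    · rintro s ⟨hs, hv⟩
      simp only [colP, Finset.mem_image, Finset.mem_univ, true_and] at hs
      obtain ⟨i, rfl⟩ := hs
      have : v.1 = i := by simpa using hv
      rw [this]

lemma col_cut (m : ℕ) : cutScore (m + 1) (colP (m + 1)) = (m + 1) * m := by
  rw [← ncard_h m, cutScore]
  congr 1
  ext e
  rw [Set.mem_ofPred_eq, edgeSet_eq]
  constructor
  · rintro ⟨⟨p, rfl⟩ | h, h2⟩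
    · exact absurd ⟨_, Finset.mem_image_of_mem _ (Finset.mem_univ p.1), by simp [vEdge]⟩ h2
    · exact h
  · rintro ⟨p, rfl⟩
    refine ⟨Or.inr ⟨p, rfl⟩, ?_⟩
    rintro ⟨s, hs, h⟩
    simp only [colP, Finset.mem_image, Finset.mem_univ, true_and] at hs
    obtain ⟨i, rfl⟩ := hs
    simp [hEdge, Fin.ext_iff] at h
    omega

lemma cut_le (m : ℕ) (Q : Finset (Finset (Fin (m + 1) × Fin (m + 1))))
    (hQ : IsGridPartition (m + 1) Q) : cutScore (m + 1) Q ≤ (m + 1) * m := by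
  classical
  obtain ⟨hc, hs, hconn, hu⟩ := hQ
  set G := gridGraph (m + 1) with hG
  let E : Finset (Fin (m + 1) × Fin (m + 1)) → Finset (Sym2 (Fin (m + 1) × Fin (m + 1))) :=
    fun s => Finset.univ.filter (fun e => e ∈ G.edgeSet ∧ ∀ v ∈ e, v ∈ s)
  have hE : ∀ s ∈ Q, m ≤ (E s).card := by
    intro s hsQ
    have h1 := (hconn s hsQ).card_vert_le_card_edgeSet_add_one
    have h2 : Nat.card (↑s : Set (Fin (m + 1) × Fin (m + 1))) = m + 1 := by
      have := hs s hsQ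
      simpa using this
    rw [h2] at h1
    have h3 : Nat.card (G.induce (↑s : Set (Fin (m + 1) × Fin (m + 1)))).edgeSet
        ≤ (E s).card := by
      rw [Nat.card_coe_set_eq, ← Set.ncard_coe_finset (E s)]
      refine Set.ncard_le_ncard_of_injOn (Sym2.map Subtype.val) ?_
        ((Sym2.map.injective Subtype.val_injective).injOn) (Finset.finite_toSet _)
      intro e he
      induction e with
      | _ a b =>
        have ha := a.2
        have hb := b.2
        simp only [Finset.mem_coe] at ha hb
        have hadj : G.Adj a b := by simpa using he
        simp only [E, Finset.mem_coe, Finset.mem_filter, Finset.mem_univ, true_and,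
          Sym2.map_mk, SimpleGraph.mem_edgeSet, Sym2.mem_iff]
        refine ⟨hadj, ?_⟩
        rintro v (rfl | rfl)
        · exact ha
        · exact hb
    omega
  have hdisj : (Q : Set _).PairwiseDisjoint E := by
    intro s hsQ t htQ hst
    rw [Function.onFun, Finset.disjoint_left]
    intro e h1 h2
    apply hst
    induction e with
    | _ a b =>
      simp only [E, Finset.mem_filter] at h1 h2
      exact (hu a).unique ⟨hsQ, h1.2.2 a (by simp)⟩ ⟨htQ, h2.2.2 a (by simp)⟩
  have hI : (m + 1) * m ≤ (Q.biUnion E).card := by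
    rw [Finset.card_biUnion hdisj]
    calc (m + 1) * m = ∑ s ∈ Q, m := by rw [Finset.sum_const, hc, smul_eq_mul]
      _ ≤ _ := Finset.sum_le_sum hE
  have hsum : cutScore (m + 1) Q + (Q.biUnion E).card ≤ G.edgeSet.ncard := by
    rw [cutScore, ← Set.ncard_coe_finset (Q.biUnion E), ← Set.ncard_union_eq]
    · apply Set.ncard_le_ncard _ (Set.toFinite _)
      rintro e (h | h)
      · exact h.1
      · simp only [E, Finset.coe_biUnion, Set.mem_iUnion, Finset.mem_coe,
          Finset.mem_filter] at h
        obtain ⟨s, _, h⟩ := h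
        exact h.2.1
    · rw [Set.disjoint_left]
      intro e h1 h
      simp only [E, Finset.coe_biUnion, Set.mem_iUnion, Finset.mem_coe,
          Finset.mem_filter] at h
      obtain ⟨s, hsQ, h⟩ := h
      exact h1.2 ⟨s, hsQ, h.2.2⟩
  have := ncard_edgeSet_le m
  rw [← hG] at this
  omega

theorem columns_partition_max_cut (n : ℕ) (hn : 1 ≤ n) :
    IsGridPartition n
      (Finset.image
        (fun i : Fin n => Finset.univ.filter (fun v : Fin n × Fin n => v.1 = i))
        Finset.univ) ∧
    cutScore n
      (Finset.image
        (fun i : Fin n => Finset.univ.filter (fun v : Fin n × Fin n => v.1 = i))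
        Finset.univ) = n * (n - 1) ∧
    IsGreatest {m : ℕ | ∃ Q : Finset (Finset (Fin n × Fin n)),
        IsGridPartition n Q ∧ cutScore n Q = m} (n * (n - 1)) := by
  obtain ⟨m, rfl⟩ : ∃ m, n = m + 1 := ⟨n - 1, by omega⟩
  rw [Nat.add_sub_cancel]
  refine ⟨col_part m, col_cut m, ⟨colP (m + 1), col_part m, col_cut m⟩, ?_⟩
  rintro k ⟨Q, hQ, rfl⟩
  exact cut_le m Q hQ
end

section
/- Let $n = k^2$ be a perfect square with $k \ge 1$. The partition of the $n\times n$ grid graph into $k^2$ axis-aligned $k\times k$ squares (the parts $\{ak,\dots,ak+k-1\}\times\{bk,\dots,bk+k-1\}$ for $0 \le a,b \le k-1$) is a partition into $n$ parts, each of size $n$ and each inducing a connected subgraph, and its cut score equals $2n(\sqrt{n}-1) = 2k^2(k-1)$. -/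
open Filter

theorem gg_adj (n : ℕ) (u v : Fin n × Fin n) : (gridGraph n).Adj u v ↔
    (((u.1 : ℕ) = v.1 ∧ ((u.2 : ℕ) + 1 = v.2 ∨ (v.2 : ℕ) + 1 = u.2)) ∨
     ((u.2 : ℕ) = v.2 ∧ ((u.1 : ℕ) + 1 = v.1 ∨ (v.1 : ℕ) + 1 = u.1))) := by
  obtain ⟨a, b⟩ := u
  obtain ⟨c, d⟩ := v
  simp only [gridGraph, SimpleGraph.fromRel_adj, ne_eq, Prod.mk.injEq, Fin.ext_iff]
  omega

def blk (k : ℕ) (ab : Fin k × Fin k) : Finset (Fin (k ^ 2) × Fin (k ^ 2)) :=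
  Finset.univ.filter (fun v : Fin (k ^ 2) × Fin (k ^ 2) =>
            (v.1 : ℕ) / k = (ab.1 : ℕ) ∧ (v.2 : ℕ) / k = (ab.2 : ℕ))

theorem mem_blk (k : ℕ) (ab : Fin k × Fin k) (v : Fin (k ^ 2) × Fin (k ^ 2)) :
    v ∈ blk k ab ↔ (v.1 : ℕ) / k = (ab.1 : ℕ) ∧ (v.2 : ℕ) / k = (ab.2 : ℕ) := by
  simp [blk]

theorem lt_sq {k a i : ℕ} (ha : a < k) (hi : i < k) : a * k + i < k ^ 2 := by
  have : (a + 1) * k ≤ k * k := Nat.mul_le_mul_right k ha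
  nlinarith

theorem div_lt_k {k : ℕ} (x : Fin (k ^ 2)) : (x : ℕ) / k < k := by
  have := x.2
  apply Nat.div_lt_of_lt_mul
  nlinarith

theorem card_line (k : ℕ) (hk : 1 ≤ k) (a : Fin k) :
    (Finset.univ.filter (fun x : Fin (k ^ 2) => (x : ℕ) / k = (a : ℕ))).card = k := by
  have h : (Finset.univ : Finset (Fin k)).card = 
    (Finset.univ.filter (fun x : Fin (k ^ 2) => (x : ℕ) / k = (a : ℕ))).card := by
    apply Finset.card_bij (fun (i : Fin k) _ => (⟨a * k + i, lt_sq a.2 i.2⟩ : Fin (k ^ 2)))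
    · intro i _
      simp only [Finset.mem_filter, Finset.mem_univ, true_and]
      rw [Nat.mul_comm, Nat.mul_add_div (by omega), Nat.div_eq_of_lt i.2, Nat.add_zero]
    · intro i _ j _ h
      simp only [Fin.mk.injEq] at h
      exact Fin.ext (by omega)
    · intro x hx
      simp only [Finset.mem_filter, Finset.mem_univ, true_and] at hx
      refine ⟨⟨x % k, Nat.mod_lt _ (by omega)⟩, Finset.mem_univ _, ?_⟩
      apply Fin.ext
      simp only [← hx]
      exact Nat.div_add_mod' _ _
  rw [← h]; simp

theorem card_blk (k : ℕ) (hk : 1 ≤ k) (ab : Fin k × Fin k) : (blk k ab).card = k ^ 2 := by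
  have : blk k ab = (Finset.univ.filter (fun x : Fin (k ^ 2) => (x : ℕ) / k = (ab.1 : ℕ))) ×ˢ
      (Finset.univ.filter (fun x : Fin (k ^ 2) => (x : ℕ) / k = (ab.2 : ℕ))) := by
    ext v; simp [mem_blk]
  rw [this, Finset.card_product, card_line k hk, card_line k hk, sq]

theorem conn_blk (k : ℕ) (hk : 1 ≤ k) (ab : Fin k × Fin k) :
    ((gridGraph (k ^ 2)).induce (↑(blk k ab) : Set (Fin (k ^ 2) × Fin (k ^ 2)))).Connected := by
  obtain ⟨a, b⟩ := ab
  have hc : ((⟨a * k, lt_sq a.2 hk⟩, ⟨b * k, lt_sq b.2 hk⟩) : Fin (k ^ 2) × Fin (k ^ 2)) ∈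
      blk k (a, b) := by
    rw [mem_blk]
    exact ⟨Nat.mul_div_cancel _ hk, Nat.mul_div_cancel _ hk⟩
  have key : ∀ (N : ℕ) (v : Fin (k ^ 2) × Fin (k ^ 2)) (hv : v ∈ blk k (a, b)),
      (v.1 : ℕ) + v.2 = N →
      ((gridGraph (k ^ 2)).induce (↑(blk k (a, b)) : Set (Fin (k ^ 2) × Fin (k ^ 2)))).Reachable
        ⟨v, hv⟩ ⟨_, hc⟩ := by
    intro N
    induction N with
    | zero =>
      rintro ⟨x, y⟩ hv hN
      have h := (mem_blk _ _ _).1 hv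
      simp only at h hN
      have hx : (x : ℕ) = 0 := by omega
      have hy : (y : ℕ) = 0 := by omega
      have e : (x, y) = ((⟨a * k, lt_sq a.2 hk⟩, ⟨b * k, lt_sq b.2 hk⟩) :
          Fin (k ^ 2) × Fin (k ^ 2)) := by
        rw [hx, hy, Nat.zero_div] at h
        ext <;> simp [← h.1, ← h.2, hx, hy]
      simp only [e]
      exact SimpleGraph.Reachable.refl _
    | succ N ih =>
      rintro ⟨x, y⟩ hv hN
      have h := (mem_blk _ _ _).1 hv
      simp only [Nat.div_eq_iff (show 0 < k by omega)] at h
      simp only at hN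
      by_cases hx : (a : ℕ) * k < x
      · have hv' : ((⟨x - 1, by omega⟩, y) : Fin (k ^ 2) × Fin (k ^ 2)) ∈ blk k (a, b) := by
          rw [mem_blk]
          simp only [Nat.div_eq_iff (show 0 < k by omega)]
          omega
        refine SimpleGraph.Reachable.trans (SimpleGraph.Adj.reachable ?_)
          (ih _ hv' (by simp only; omega))
        refine (gg_adj _ (x, y) (⟨x - 1, by omega⟩, y)).2 (Or.inr ⟨rfl, Or.inr ?_⟩)
        simp only
        omega
      · by_cases hy : (b : ℕ) * k < y
        · have hv' : ((x, ⟨y - 1, by omega⟩) : Fin (k ^ 2) × Fin (k ^ 2)) ∈ blk k (a, b) := by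
            rw [mem_blk]
            simp only [Nat.div_eq_iff (show 0 < k by omega)]
            omega
          refine SimpleGraph.Reachable.trans (SimpleGraph.Adj.reachable ?_)
            (ih _ hv' (by simp only; omega))
          refine (gg_adj _ (x, y) (x, ⟨y - 1, by omega⟩)).2 (Or.inl ⟨rfl, Or.inr ?_⟩)
          simp only
          omega
        · have e : (x, y) = ((⟨a * k, lt_sq a.2 hk⟩, ⟨b * k, lt_sq b.2 hk⟩) :
              Fin (k ^ 2) × Fin (k ^ 2)) := by
            ext <;> simp only <;> omega
          simp only [e]
          exact SimpleGraph.Reachable.refl _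
  have : Nonempty (↑(↑(blk k (a, b)) : Set (Fin (k ^ 2) × Fin (k ^ 2)))) := ⟨⟨_, hc⟩⟩
  refine ⟨?_⟩
  rintro ⟨u, hu⟩ ⟨v, hv⟩
  exact (key _ u hu rfl).trans (key _ v hv rfl).symm

theorem blk_inj (k : ℕ) (hk : 1 ≤ k) : Function.Injective (blk k) := by
  intro p q h
  have hc : ((⟨p.1 * k, lt_sq p.1.2 hk⟩, ⟨p.2 * k, lt_sq p.2.2 hk⟩) :
      Fin (k ^ 2) × Fin (k ^ 2)) ∈ blk k p := by
    rw [mem_blk]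
    exact ⟨Nat.mul_div_cancel _ hk, Nat.mul_div_cancel _ hk⟩
  have hc' := hc
  rw [h] at hc'
  rw [mem_blk] at hc hc'
  ext
  · rw [← hc.1, ← hc'.1]
  · rw [← hc.2, ← hc'.2]

theorem succ_mul_lt {k m : ℕ} (hm : m < k - 1) : (m + 1) * k < k ^ 2 :=
  lt_sq (i := 0) (by omega) (by omega)

/-- The cut edges: `true` for edges changing the first coordinate. -/
def cutE (k : ℕ) : Bool × Fin (k - 1) × Fin (k ^ 2) → Sym2 (Fin (k ^ 2) × Fin (k ^ 2))
  | (true, m, y) => s((⟨(m + 1) * k - 1, lt_of_le_of_lt (Nat.sub_le _ _) (succ_mul_lt m.2)⟩, y),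
      (⟨(m + 1) * k, succ_mul_lt m.2⟩, y))
  | (false, m, y) => s((y, ⟨(m + 1) * k - 1, lt_of_le_of_lt (Nat.sub_le _ _) (succ_mul_lt m.2)⟩),
      (y, ⟨(m + 1) * k, succ_mul_lt m.2⟩))

theorem cutE_inj (k : ℕ) (hk : 1 ≤ k) : Function.Injective (cutE k) := by
  have pos : ∀ m : ℕ, 0 < (m + 1) * k := fun m => Nat.mul_pos (by omega) hk
  have canc : ∀ m m' : ℕ, (m + 1) * k = (m' + 1) * k → m = m' := fun m m' h => by
    have := Nat.eq_of_mul_eq_mul_right hk h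
    omega
  rintro ⟨_ | _, m, y⟩ ⟨_ | _, m', y'⟩ h <;>
  · have h1 := pos m
    have h2 := pos m'
    have h3 := canc m m'
    simp only [cutE, Sym2.eq_iff, Prod.mk.injEq, Fin.ext_iff] at h
    simp only [Prod.mk.injEq, Fin.ext_iff, true_and, reduceCtorEq, false_and]
    generalize ((m : ℕ) + 1) * k = p at *
    generalize ((m' : ℕ) + 1) * k = q at *
    omega

theorem same_blk (k : ℕ) (u v : Fin (k ^ 2) × Fin (k ^ 2)) :
    (∃ s ∈ Finset.image (blk k) Finset.univ, ∀ w ∈ s(u, v), w ∈ s) ↔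
      (u.1 : ℕ) / k = (v.1 : ℕ) / k ∧ (u.2 : ℕ) / k = (v.2 : ℕ) / k := by
  simp only [Finset.mem_image, Finset.mem_univ, true_and, Sym2.mem_iff, exists_exists_eq_and,
    forall_eq_or_imp, forall_eq, mem_blk]
  constructor
  · rintro ⟨ab, h1, h2⟩
    omega
  · rintro ⟨h1, h2⟩
    exact ⟨(⟨_, div_lt_k u.1⟩, ⟨_, div_lt_k u.2⟩), ⟨rfl, rfl⟩, h1.symm, h2.symm⟩

theorem step_div {k x : ℕ} (h : x / k ≠ (x + 1) / k) (hx : x + 1 < k ^ 2) :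
    ∃ m : Fin (k - 1), x + 1 = (m + 1) * k := by
  rw [Nat.succ_div] at h
  split_ifs at h with hd
  · obtain ⟨c, hc⟩ := hd
    have h1 : c < k := by
      by_contra hh
      have : k * k ≤ k * c := Nat.mul_le_mul_left k (by omega)
      nlinarith
    have h0 : c ≠ 0 := by
      rintro rfl
      omega
    refine ⟨⟨c - 1, by omega⟩, ?_⟩
    simp only
    rw [Nat.sub_add_cancel (by omega), hc, Nat.mul_comm]
  · omega

theorem jump {k m : ℕ} (hk : 1 ≤ k) : ((m + 1) * k - 1) / k ≠ (m + 1) * k / k := by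
  rw [Nat.mul_div_cancel _ hk]
  have : 0 < (m + 1) * k := Nat.mul_pos (by omega) hk
  exact (Nat.div_lt_of_lt_mul (by rw [Nat.mul_comm k]; omega)).ne

theorem cut_set (k : ℕ) (hk : 1 ≤ k) :
    {e ∈ (gridGraph (k ^ 2)).edgeSet | ¬ ∃ s ∈ Finset.image (blk k) Finset.univ, ∀ v ∈ e, v ∈ s}
      = Set.range (cutE k) := by
  ext e
  constructor
  · induction e using Sym2.ind with
    | _ u v =>
    obtain ⟨x, y⟩ := u
    obtain ⟨z, w⟩ := v
    rintro ⟨h1, h2⟩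
    rw [same_blk] at h2
    rw [SimpleGraph.mem_edgeSet, gg_adj] at h1
    simp only at h1 h2
    rcases h1 with ⟨h, h1 | h1⟩ | ⟨h, h1 | h1⟩
    · obtain ⟨m, hm⟩ := step_div (k := k) (x := y) (fun hh => h2 ⟨by rw [h], by rw [hh, h1]⟩)
        (by omega)
      refine ⟨(false, m, x), ?_⟩
      simp only [cutE, Sym2.eq_iff, Prod.mk.injEq, Fin.ext_iff, true_and, and_true]
      clear h2
      generalize ((m : ℕ) + 1) * k = p at hm ⊢
      omega
    · obtain ⟨m, hm⟩ := step_div (k := k) (x := w) (fun hh => h2 ⟨by rw [h], by rw [hh, h1]⟩)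
        (by omega)
      refine ⟨(false, m, x), ?_⟩
      simp only [cutE, Sym2.eq_iff, Prod.mk.injEq, Fin.ext_iff, true_and, and_true]
      clear h2
      generalize ((m : ℕ) + 1) * k = p at hm ⊢
      omega
    · obtain ⟨m, hm⟩ := step_div (k := k) (x := x) (fun hh => h2 ⟨by rw [hh, h1], by rw [h]⟩)
        (by omega)
      refine ⟨(true, m, y), ?_⟩
      simp only [cutE, Sym2.eq_iff, Prod.mk.injEq, Fin.ext_iff, true_and, and_true]
      clear h2
      generalize ((m : ℕ) + 1) * k = p at hm ⊢
      omega
    · obtain ⟨m, hm⟩ := step_div (k := k) (x := z) (fun hh => h2 ⟨by rw [hh, h1], by rw [h]⟩)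
        (by omega)
      refine ⟨(true, m, y), ?_⟩
      simp only [cutE, Sym2.eq_iff, Prod.mk.injEq, Fin.ext_iff, true_and, and_true]
      clear h2
      generalize ((m : ℕ) + 1) * k = p at hm ⊢
      omega
  · rintro ⟨⟨_ | _, m, y⟩, rfl⟩
    all_goals
      have hp : 0 < ((m : ℕ) + 1) * k := Nat.mul_pos (by omega) hk
      have hj := jump (m := m) hk
      simp only [cutE]
      refine ⟨?_, ?_⟩
      · rw [SimpleGraph.mem_edgeSet, gg_adj]
        simp only [true_and, and_true]
        clear hj
        generalize ((m : ℕ) + 1) * k = p at hp ⊢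
        omega
      · rw [same_blk]
        simp only
        tauto

theorem square_partition_cut_score (k : ℕ) (hk : 1 ≤ k) :
    IsGridPartition (k ^ 2)
      (Finset.image
        (fun ab : Fin k × Fin k =>
          Finset.univ.filter (fun v : Fin (k ^ 2) × Fin (k ^ 2) =>
            (v.1 : ℕ) / k = (ab.1 : ℕ) ∧ (v.2 : ℕ) / k = (ab.2 : ℕ)))
        Finset.univ) ∧
    cutScore (k ^ 2)
      (Finset.image
        (fun ab : Fin k × Fin k =>
          Finset.univ.filter (fun v : Fin (k ^ 2) × Fin (k ^ 2) =>
            (v.1 : ℕ) / k = (ab.1 : ℕ) ∧ (v.2 : ℕ) / k = (ab.2 : ℕ)))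
        Finset.univ) = 2 * k ^ 2 * (k - 1) := by
  change IsGridPartition (k ^ 2) (Finset.image (blk k) Finset.univ) ∧
    cutScore (k ^ 2) (Finset.image (blk k) Finset.univ) = 2 * k ^ 2 * (k - 1)
  refine ⟨⟨?_, ?_, ?_, ?_⟩, ?_⟩
  · rw [Finset.card_image_of_injective _ (blk_inj k hk)]
    simp [sq]
  · intro s hs
    obtain ⟨ab, _, rfl⟩ := Finset.mem_image.1 hs
    exact card_blk k hk ab
  · intro s hs
    obtain ⟨ab, _, rfl⟩ := Finset.mem_image.1 hs
    exact conn_blk k hk ab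
  · intro v
    refine ⟨blk k (⟨_, div_lt_k v.1⟩, ⟨_, div_lt_k v.2⟩),
      ⟨Finset.mem_image_of_mem _ (Finset.mem_univ _), (mem_blk _ _ _).2 ⟨rfl, rfl⟩⟩, ?_⟩
    rintro s ⟨hs, hv⟩
    obtain ⟨ab, _, rfl⟩ := Finset.mem_image.1 hs
    rw [mem_blk] at hv
    congr 1
    ext
    · exact hv.1.symm
    · exact hv.2.symm
  · rw [cutScore, cut_set k hk, ← Nat.card_coe_set_eq,
      Nat.card_range_of_injective (cutE_inj k hk)]
    simp only [Nat.card_eq_fintype_card, Fintype.card_prod, Fintype.card_bool, Fintype.card_fin]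
    ring
end

section
/- For $\varepsilon > 0$ and $n \ge 2$, let $\mathcal{C}_n(\varepsilon)$ denote the set of partitions of the vertex set of the $n\times n$ grid graph into $n$ parts, each of size $n$ and each inducing a connected subgraph, whose cut score is at most $\varepsilon n^2$. Then $|\mathcal{C}_n(\varepsilon)| \le \sum_{j=n-1}^{\lfloor \varepsilon n^2 \rfloor} \binom{2n(n-1)}{j}$. -/
open Filter

/-- The set of cut edges of a family `P`. -/
def cutSet (n : ℕ) (P : Finset (Finset (Fin n × Fin n))) : Set (Sym2 (Fin n × Fin n)) :=
  {e ∈ (gridGraph n).edgeSet | ¬ ∃ s ∈ P, ∀ v ∈ e, v ∈ s}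

lemma gridGraph_connected (n : ℕ) (hn : 2 ≤ n) : (gridGraph n).Connected := by
  obtain ⟨m, rfl⟩ : ∃ m, n = m + 1 := ⟨n - 1, by omega⟩
  have h : gridGraph (m + 1) =
      (SimpleGraph.pathGraph (m + 1)).boxProd (SimpleGraph.pathGraph (m + 1)) := by
    ext ⟨a, b⟩ ⟨c, d⟩
    simp only [gridGraph, SimpleGraph.fromRel_adj, SimpleGraph.boxProd_adj,
      SimpleGraph.pathGraph_adj, ne_eq, Prod.mk.injEq, Fin.ext_iff]
    omega
  rw [h]
  exact (SimpleGraph.pathGraph_connected m).boxProd (SimpleGraph.pathGraph_connected m)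

lemma gridGraph_edge_card (n : ℕ) (hn : 2 ≤ n) :
    (gridGraph n).edgeSet.ncard ≤ 2 * n * (n - 1) := by
  obtain ⟨m, rfl⟩ : ∃ m, n = m + 1 := ⟨n - 1, by omega⟩
  let F : Bool × Fin (m + 1) × Fin m → Sym2 (Fin (m + 1) × Fin (m + 1)) := fun x =>
    if x.1 then s((x.2.1, x.2.2.castSucc), (x.2.1, x.2.2.succ))
    else s((x.2.2.castSucc, x.2.1), (x.2.2.succ, x.2.1))
  have key : ∀ a b : Fin (m + 1) × Fin (m + 1),
      ((a.1 = b.1 ∧ (a.2 : ℕ) + 1 = (b.2 : ℕ)) ∨ (a.2 = b.2 ∧ (a.1 : ℕ) + 1 = (b.1 : ℕ))) →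
      s(a, b) ∈ F '' Set.univ := by
    rintro ⟨a, b⟩ ⟨c, d⟩ (⟨h1, h2⟩ | ⟨h1, h2⟩)
    · simp only at h1 h2
      subst h1
      refine ⟨(true, a, ⟨b, by omega⟩), trivial, ?_⟩
      have : d = Fin.succ ⟨b, by omega⟩ := by ext; simp [← h2]
      simp [F, this]
    · simp only at h1 h2
      subst h1
      refine ⟨(false, b, ⟨a, by omega⟩), trivial, ?_⟩
      have : c = Fin.succ ⟨a, by omega⟩ := by ext; simp [← h2]
      simp [F, this]
  have hsub : (gridGraph (m + 1)).edgeSet ⊆ F '' Set.univ := by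
    intro e
    induction e using Sym2.ind with
    | _ a b =>
      intro h
      rw [SimpleGraph.mem_edgeSet, gridGraph, SimpleGraph.fromRel_adj] at h
      rcases h.2 with h | h
      · exact key a b h
      · rw [Sym2.eq_swap]; exact key b a h
  calc _ ≤ (F '' Set.univ).ncard := Set.ncard_le_ncard hsub (Set.toFinite _)
    _ ≤ (Set.univ : Set (Bool × Fin (m + 1) × Fin m)).ncard := Set.ncard_image_le (Set.toFinite _)
    _ = _ := by simp [Set.ncard_univ, Nat.card_eq_fintype_card, mul_assoc]

lemma part_subset {n : ℕ} {P P' : Finset (Finset (Fin n × Fin n))}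
    (hP : IsGridPartition n P) (hP' : IsGridPartition n P') (h : cutSet n P = cutSet n P')
    {s s' : Finset (Fin n × Fin n)} (hs : s ∈ P) (hs' : s' ∈ P') {v : Fin n × Fin n}
    (hv : v ∈ s) (hv' : v ∈ s') : s ⊆ s' := by
  intro u hu
  obtain ⟨w⟩ := (hP.2.2.1 s hs).preconnected ⟨v, hv⟩ ⟨u, hu⟩
  have main : ∀ (a b : (↑s : Set (Fin n × Fin n)))
      (_ : ((gridGraph n).induce (↑s : Set (Fin n × Fin n))).Walk a b),
      a.1 ∈ s' → b.1 ∈ s' := by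
    intro a b w
    induction w with
    | nil => exact id
    | @cons a b c hab _ ih =>
      intro ha
      apply ih
      have hadj : (gridGraph n).Adj a.1 b.1 := hab
      have h1 : s(a.1, b.1) ∉ cutSet n P := by
        rintro ⟨-, h2⟩
        apply h2
        refine ⟨s, hs, ?_⟩
        intro x hx
        rcases Sym2.mem_iff.1 hx with rfl | rfl
        · exact a.2
        · exact b.2
      rw [h] at h1
      have h3 : ∃ t ∈ P', ∀ x ∈ s(a.1, b.1), x ∈ t := by
        by_contra h4
        exact h1 ⟨hadj, h4⟩
      obtain ⟨t, ht, hx⟩ := h3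
      have : t = s' := (hP'.2.2.2 a.1).unique ⟨ht, hx _ (Sym2.mem_mk_left _ _)⟩ ⟨hs', ha⟩
      rw [← this]
      exact hx _ (Sym2.mem_mk_right _ _)
  exact main _ _ w hv'

lemma subset_of_cutSet_eq {n : ℕ} {P P' : Finset (Finset (Fin n × Fin n))}
    (hP : IsGridPartition n P) (hP' : IsGridPartition n P') (h : cutSet n P = cutSet n P') :
    P ⊆ P' := by
  intro s hs
  obtain ⟨⟨v, hv⟩⟩ := (hP.2.2.1 s hs).nonempty
  obtain ⟨s', ⟨hs', hv'⟩, -⟩ := hP'.2.2.2 v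
  have : s = s' := Finset.Subset.antisymm (part_subset hP hP' h hs hs' hv hv')
    (part_subset hP' hP h.symm hs' hs hv' hv)
  rwa [this]

lemma cutSet_card_ge {n : ℕ} (hn : 2 ≤ n) {P : Finset (Finset (Fin n × Fin n))}
    (hP : IsGridPartition n P) : n - 1 ≤ (cutSet n P).ncard := by
  classical
  choose f hf hfu using hP.2.2.2
  let g : Fin n × Fin n → P := fun v => ⟨f v, (hf v).1⟩
  have hg : ∀ v (s : P), v ∈ s.1 → g v = s := fun v s hv =>
    Subtype.ext (hfu v s.1 ⟨s.2, hv⟩).symm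
  let Q : SimpleGraph P := SimpleGraph.fromRel (fun s t => ∃ u v, g u = s ∧ g v = t ∧
    (gridGraph n).Adj u v)
  have hreach : ∀ u v, (gridGraph n).Walk u v → Q.Reachable (g u) (g v) := by
    intro u v w
    induction w with
    | nil => exact SimpleGraph.Reachable.refl _
    | @cons a b c hab _ ih =>
      refine SimpleGraph.Reachable.trans ?_ ih
      by_cases hne : g a = g b
      · rw [hne]
      · exact SimpleGraph.Adj.reachable
          ((SimpleGraph.fromRel_adj _ _ _).2 ⟨hne, Or.inl ⟨a, b, rfl, rfl, hab⟩⟩)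
  have hsurj : ∀ s : P, ∃ v, g v = s := by
    intro s
    obtain ⟨⟨v, hv⟩⟩ := (hP.2.2.1 s.1 s.2).nonempty
    exact ⟨v, hg v s hv⟩
  have hG := gridGraph_connected n hn
  have hQ : Q.Connected := by
    haveI : Nonempty P := ⟨g ⟨⟨0, by omega⟩, ⟨0, by omega⟩⟩⟩
    refine ⟨?_⟩
    intro s t
    obtain ⟨u, rfl⟩ := hsurj s
    obtain ⟨v, rfl⟩ := hsurj t
    obtain ⟨w⟩ := hG.preconnected u v
    exact hreach u v w
  have h1 := hQ.card_vert_le_card_edgeSet_add_one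
  have key : ∀ u v, g u ≠ g v → (gridGraph n).Adj u v → s(u, v) ∈ cutSet n P := by
    intro u v hne hadj
    refine ⟨hadj, ?_⟩
    rintro ⟨s, hs, hx⟩
    exact hne ((hg u ⟨s, hs⟩ (hx _ (Sym2.mem_mk_left _ _))).trans
      (hg v ⟨s, hs⟩ (hx _ (Sym2.mem_mk_right _ _))).symm)
  have hsub : Q.edgeSet ⊆ Sym2.map g '' cutSet n P := by
    intro e
    induction e using Sym2.ind with
    | _ a b =>
      intro h
      rw [SimpleGraph.mem_edgeSet, SimpleGraph.fromRel_adj] at h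
      obtain ⟨hne, ⟨u, v, rfl, rfl, hadj⟩ | ⟨u, v, rfl, rfl, hadj⟩⟩ := h
      · exact ⟨s(u, v), key u v hne hadj, by simp⟩
      · exact ⟨s(v, u), key v u hne hadj.symm, by simp⟩
  have h2 : Q.edgeSet.ncard ≤ (cutSet n P).ncard :=
    (Set.ncard_le_ncard hsub (Set.toFinite _)).trans (Set.ncard_image_le (Set.toFinite _))
  have h3 : Nat.card P = n := by simp [hP.1]
  rw [h3] at h1
  change n ≤ Q.edgeSet.ncard + 1 at h1
  omega

theorem compact_count_le_binomial_sum (ε : ℝ) (hε : 0 < ε) (n : ℕ) (hn : 2 ≤ n) :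
    Nat.card {P : Finset (Finset (Fin n × Fin n)) //
        IsGridPartition n P ∧ (cutScore n P : ℝ) ≤ ε * (n : ℝ) ^ 2} ≤
      ∑ j ∈ Finset.Icc (n - 1) ⌊ε * (n : ℝ) ^ 2⌋₊, (2 * n * (n - 1)).choose j := by
  classical
  let E : Finset (Sym2 (Fin n × Fin n)) := (Set.toFinite (gridGraph n).edgeSet).toFinset
  have hE : E.card ≤ 2 * n * (n - 1) := by
    rw [← Set.ncard_eq_toFinset_card]
    exact gridGraph_edge_card n hn
  let T := (Finset.Icc (n - 1) ⌊ε * (n : ℝ) ^ 2⌋₊).biUnion (fun j => E.powersetCard j)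
  have hT : T.card ≤ ∑ j ∈ Finset.Icc (n - 1) ⌊ε * (n : ℝ) ^ 2⌋₊,
      (2 * n * (n - 1)).choose j := by
    refine Finset.card_biUnion_le.trans (Finset.sum_le_sum fun j _ => ?_)
    rw [Finset.card_powersetCard]
    exact Nat.choose_le_choose j hE
  refine le_trans ?_ hT
  let φ : {P : Finset (Finset (Fin n × Fin n)) //
        IsGridPartition n P ∧ (cutScore n P : ℝ) ≤ ε * (n : ℝ) ^ 2} → T := fun P =>
    ⟨(Set.toFinite (cutSet n P.1)).toFinset, by
      refine Finset.mem_biUnion.2 ⟨(cutSet n P.1).ncard, ?_, ?_⟩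
      · exact Finset.mem_Icc.2 ⟨cutSet_card_ge hn P.2.1, Nat.le_floor P.2.2⟩
      · refine Finset.mem_powersetCard.2 ⟨?_, (Set.ncard_eq_toFinset_card _ _).symm⟩
        intro e he
        simp only [E, Set.Finite.mem_toFinset] at he ⊢
        exact he.1⟩
  have hφ : Function.Injective φ := by
    intro P P' h
    have h1 : cutSet n P.1 = cutSet n P'.1 := by
      simpa [φ] using h
    exact Subtype.ext (Finset.Subset.antisymm (subset_of_cutSet_eq P.2.1 P'.2.1 h1)
      (subset_of_cutSet_eq P'.2.1 P.2.1 h1.symm))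
  have := Nat.card_le_card_of_injective φ hφ
  simpa using this
end
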